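/- arXiv:2603.06415 — 2 statements merged into one kernel-verified Lean document; each statement's English description precedes it below -/
import Mathlib

section
/- Let n ≥ 4r². If A, B ⊆ C([n], r) are cross-intersecting r-uniform hypergraphs, then σ_r(A)·σ_r(B) ≤ r²·C(n-2, r-2)². -/
/-!
Let `D = C(n-2, r-2)` and `C = C(n-1, r-1)`, so that `(r-1) C = (n-1) D` for `r ≥ 2`.

If one vertex `v` lies in every set of `A ∪ B`, any `r`-set avoiding `v` is a non-edge of both
families, and each of its vertices has degree at most `D`, which gives the bound
(`oreDeg_le_of_star`).

Otherwise, fix `b ∈ B`. Every set of `A` meets `b`, so the degrees in `A` of the vertices outside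
`b` add up to at most `(r-1)|A|`, and every `r`-set outside `b` is a non-edge of `A`. Taking the
`r` vertices of smallest degree gives `(n-r) σ_r(A) ≤ r (r-1) |A|` (`oreDeg_mul_le`), and likewise
for `B`. It remains to see that `2 |A| |B| ≤ C²` (`two_mul_card_mul_card_le`).
Let `s` and `t` be the covering numbers of `A` and `B`. If `|T| < t`, some `b ∈ B` is disjoint from
`T`, and each set of `A` containing `T` contains one of the `r` sets `T ∪ {x}` with `x ∈ b`; since
`n ≥ 4r²`, each such branching step gains a factor `4` (`branch_step`). Starting from the `s`
vertices of a minimum cover of `A` one gets `4^(t-1) |A| ≤ s C`, and symmetrically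
`4^(s-1) |B| ≤ t C`. As `2m ≤ 4^(m-1)` for `m ≥ 2`, this suffices unless `s = t = 1`; in that case
the vertex covering `A` does not cover `B`, and a single branching step suffices.
-/

open Finset

/-- The degree of a vertex `v`: the number of edges of `H` containing `v`. -/
def hdeg {n : ℕ} (H : Finset (Finset (Fin n))) (v : Fin n) : ℕ :=
  (H.filter fun e => v ∈ e).card

/-- The Ore-degree `σ_r(H)`: the minimum of `∑_{v ∈ S} deg(v)` over all
    non-edge `r`-subsets `S` of the vertex set. -/
noncomputable def oreDeg {n : ℕ} (r : ℕ) (H : Finset (Finset (Fin n))) : ℕ :=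
  sInf {d : ℕ | ∃ S : Finset (Fin n), S.card = r ∧ S ∉ H ∧ d = ∑ v ∈ S, hdeg H v}

/-! ### Covers and branching -/

/-- The members of `H` that contain `T`. -/
def above {n : ℕ} (H : Finset (Finset (Fin n))) (T : Finset (Fin n)) : Finset (Finset (Fin n)) :=
  H.filter fun e => T ⊆ e

/-- `T` is a cover (transversal) of `H`: it meets every member of `H`. -/
def Covers {n : ℕ} (T : Finset (Fin n)) (H : Finset (Finset (Fin n))) : Prop :=
  ∀ e ∈ H, ¬ Disjoint T e

lemma card_above_le {n r : ℕ} {H : Finset (Finset (Fin n))} (hH : ∀ e ∈ H, e.card = r)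
    (T : Finset (Fin n)) : (above H T).card ≤ (n - T.card).choose (r - T.card) := by
  have h1 : (above H T).card ≤ (powersetCard (r - T.card) Tᶜ).card := by
    apply card_le_card_of_injOn (fun e => e \ T)
    · intro e he
      simp only [above, coe_filter, Set.mem_ofPred_eq] at he
      simp only [mem_coe, mem_powersetCard]
      refine ⟨?_, ?_⟩
      · intro x hx
        simp only [mem_sdiff] at hx
        simpa using hx.2
      · rw [card_sdiff_of_subset he.2, hH e he.1]
    · intro e he f hf hef
      simp only [above, coe_filter, Set.mem_ofPred_eq] at he hf
      simp only at hef
      rw [← sdiff_union_of_subset he.2, ← sdiff_union_of_subset hf.2, hef]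
  simpa [card_powersetCard, card_compl] using h1

lemma card_above_le_sum {n : ℕ} {H : Finset (Finset (Fin n))} {T b : Finset (Fin n)}
    (hb : Covers b H) : (above H T).card ≤ ∑ x ∈ b, (above H (insert x T)).card := by
  refine le_trans (card_le_card ?_) card_biUnion_le
  intro e he
  simp only [above, mem_filter] at he
  obtain ⟨x, hxb, hxe⟩ := not_disjoint_iff.1 (hb e he.1)
  simp only [mem_biUnion, above, mem_filter]
  exact ⟨x, hxb, he.1, insert_subset hxe he.2⟩

lemma four_mul_choose_le {n r t : ℕ} (hn : 4 * r ^ 2 ≤ n) (ht : t < r) :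
    4 * r * (n - (t + 1)).choose (r - (t + 1)) ≤ (n - t).choose (r - t) := by
  obtain ⟨q, rfl⟩ : ∃ q, r = t + 1 + q := ⟨r - (t + 1), by omega⟩
  obtain ⟨m, rfl⟩ : ∃ m, n = t + 1 + m := ⟨n - (t + 1), by
    have : t + 1 + q ≤ 4 * (t + 1 + q) ^ 2 := by nlinarith
    omega⟩
  have e1 : t + 1 + m - (t + 1) = m := by omega
  have e2 : t + 1 + q - (t + 1) = q := by omega
  have e3 : t + 1 + m - t = m + 1 := by omega
  have e4 : t + 1 + q - t = q + 1 := by omega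
  rw [e1, e2, e3, e4]
  have h := Nat.add_one_mul_choose_eq m q
  have h2 : 4 * (t + 1 + q) * (q + 1) ≤ m + 1 := by nlinarith
  refine Nat.le_of_mul_le_mul_right (c := q + 1) ?_ (by omega)
  rw [← h]
  calc 4 * (t + 1 + q) * m.choose q * (q + 1)
      = 4 * (t + 1 + q) * (q + 1) * m.choose q := by ring
    _ ≤ _ := Nat.mul_le_mul_right _ h2

/-- One branching step: if every extension of `T` by a vertex of the cover `b` satisfies the count
with gain `4 ^ j`, then `T` satisfies it with gain `4 ^ (j + 1)`. -/
lemma branch_step {n r j : ℕ} (hn : 4 * r ^ 2 ≤ n) {H : Finset (Finset (Fin n))}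
    {T b : Finset (Fin n)} (hT : T.card < r) (hbr : b.card = r) (hb : Covers b H)
    (h : ∀ x ∈ b, 4 ^ j * (above H (insert x T)).card ≤
      (n - (T.card + 1)).choose (r - (T.card + 1))) :
    4 ^ (j + 1) * (above H T).card ≤ (n - T.card).choose (r - T.card) := by
  calc 4 ^ (j + 1) * (above H T).card
      ≤ 4 ^ (j + 1) * ∑ x ∈ b, (above H (insert x T)).card :=
        Nat.mul_le_mul_left _ (card_above_le_sum hb)
    _ = 4 * ∑ x ∈ b, 4 ^ j * (above H (insert x T)).card := by rw [← mul_sum]; ring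
    _ ≤ 4 * (r * (n - (T.card + 1)).choose (r - (T.card + 1))) := by
        have := sum_le_card_nsmul _ _ _ h
        rw [hbr, smul_eq_mul] at this
        exact Nat.mul_le_mul_left _ this
    _ ≤ _ := by rw [← mul_assoc]; exact four_mul_choose_le hn hT

/-- Iterated branching: if no set of fewer than `k` vertices covers `B`, the number of members of
`A` containing `T` is smaller by a factor `4 ^ (k - |T|)` than the number of all `r`-sets
containing `T`. -/
lemma branch {n r k : ℕ} (hn : 4 * r ^ 2 ≤ n) {A B : Finset (Finset (Fin n))}
    (hA : ∀ e ∈ A, e.card = r) (hB : ∀ e ∈ B, e.card = r)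
    (hcov : ∀ b ∈ B, Covers b A) (hk : k ≤ r)
    (hmin : ∀ T : Finset (Fin n), T.card < k → ¬ Covers T B) (j : ℕ) :
    ∀ T : Finset (Fin n), T.card + j = k →
      4 ^ j * (above A T).card ≤ (n - T.card).choose (r - T.card) := by
  induction j with
  | zero => intro T _; simpa using card_above_le hA T
  | succ j ih =>
    intro T hT
    have h := hmin T (by omega)
    simp only [Covers, not_forall, not_not] at h
    obtain ⟨b, hbB, hdis⟩ := h
    refine branch_step hn (by omega) (hB b hbB) (hcov b hbB) fun x hx => ?_
    have hxT : x ∉ T := fun hxT => disjoint_left.1 hdis hxT hx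
    have hc : (insert x T).card = T.card + 1 := card_insert_of_notMem hxT
    have := ih (insert x T) (by omega)
    rwa [hc] at this

lemma card_le_of_cover {n r k : ℕ} (hn : 4 * r ^ 2 ≤ n) {A B : Finset (Finset (Fin n))}
    (hA : ∀ e ∈ A, e.card = r) (hB : ∀ e ∈ B, e.card = r)
    (hcov : ∀ b ∈ B, Covers b A) (hk : k + 1 ≤ r)
    (hmin : ∀ T : Finset (Fin n), T.card < k + 1 → ¬ Covers T B)
    {S : Finset (Fin n)} (hS : Covers S A) :
    4 ^ k * A.card ≤ S.card * (n - 1).choose (r - 1) := by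
  have h0 : A.card = (above A ∅).card := by simp [above]
  calc 4 ^ k * A.card ≤ 4 ^ k * ∑ x ∈ S, (above A (insert x ∅)).card := by
        rw [h0]; exact Nat.mul_le_mul_left _ (card_above_le_sum hS)
    _ = ∑ x ∈ S, 4 ^ k * (above A (insert x ∅)).card := mul_sum _ _ _
    _ ≤ S.card • (n - 1).choose (r - 1) := by
        refine sum_le_card_nsmul _ _ _ fun x _ => ?_
        simpa using branch hn hA hB hcov hk hmin k {x} (by rw [card_singleton]; omega)
    _ = _ := by simp

/-! ### The product bound for families without a common vertex -/

/-- The covering number is attained: for a cover `b` of `H`, with `H` nonempty, there is a minimum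
cover, whose size is written `s + 1`. -/
lemma exists_min_cover {n : ℕ} {H : Finset (Finset (Fin n))} (hne : H.Nonempty)
    {b : Finset (Fin n)} (hb : Covers b H) :
    ∃ (s : ℕ) (S : Finset (Fin n)), S.card = s + 1 ∧ Covers S H ∧ s + 1 ≤ b.card ∧
      ∀ T : Finset (Fin n), T.card < s + 1 → ¬ Covers T H := by
  classical
  obtain ⟨S, hS, hSmin⟩ := exists_min_image (univ.filter fun T => Covers T H) card
    ⟨b, by simpa using hb⟩
  simp only [mem_filter, mem_univ, true_and] at hS hSmin
  have hpos : S.card ≠ 0 := by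
    intro h
    obtain ⟨e, he⟩ := hne
    apply hS e he
    rw [card_eq_zero.1 h]
    exact disjoint_empty_left e
  refine ⟨S.card - 1, S, by omega, hS, ?_, fun T hT hTc => ?_⟩
  · have := hSmin b hb; omega
  · have := hSmin T hTc; omega

lemma succ_le_four_pow (s : ℕ) : s + 1 ≤ 4 ^ s := (Nat.lt_pow_self (by norm_num) : s < 4 ^ s)

lemma two_mul_succ_le_four_pow {s : ℕ} (hs : 1 ≤ s) : 2 * (s + 1) ≤ 4 ^ s := by
  obtain ⟨u, rfl⟩ := Nat.exists_eq_add_of_le' hs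
  have := succ_le_four_pow u
  rw [pow_succ]; omega

/-- A single branching step when all members of `A` share a vertex `x` missed by some `b ∈ B`. -/
lemma four_mul_card_le {n r : ℕ} (hn : 4 * r ^ 2 ≤ n) {A B : Finset (Finset (Fin n))}
    (hA : ∀ e ∈ A, e.card = r) (hB : ∀ e ∈ B, e.card = r)
    (hcov : ∀ b ∈ B, Covers b A) (hr : 1 ≤ r) {x : Fin n}
    (hxA : ∀ a ∈ A, x ∈ a) {b : Finset (Fin n)} (hb : b ∈ B) (hxb : x ∉ b) :
    4 * A.card ≤ (n - 1).choose (r - 1) := by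
  have h0 : above A {x} = A := by
    simp only [above]
    exact filter_true_of_mem fun a ha => by simpa using hxA a ha
  rcases hr.eq_or_lt with rfl | hr2
  · -- For `r = 1` the only candidate `{x}` is disjoint from `b`, so `A` is empty.
    have hAe : A = ∅ := by
      refine eq_empty_of_forall_notMem fun a ha => ?_
      obtain ⟨y, hyb, hya⟩ := not_disjoint_iff.1 (hcov b hb a ha)
      obtain ⟨z, rfl⟩ := card_eq_one.1 (hA a ha)
      have h1 := hxA _ ha
      simp only [mem_singleton] at h1 hya
      exact hxb (by rw [h1, ← hya]; exact hyb)
    simp [hAe]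
  · have := branch_step (j := 0) hn (T := {x}) (H := A) (by simpa using hr2) (hB b hb) (hcov b hb)
      (fun y hy => by
        have hyx : y ∉ ({x} : Finset (Fin n)) := by
          rw [mem_singleton]; rintro rfl; exact hxb hy
        have := card_above_le hA (insert y {x})
        rw [card_insert_of_notMem hyx] at this
        simpa using this)
    simpa [h0] using this

/-- The product bound for cross-intersecting families without a common vertex, a weak form of the
theorem of Frankl–Kupavskii and Wu–Xiong that is enough for `n ≥ 4r²`. -/
lemma two_mul_card_mul_card_le {n r : ℕ} (hn : 4 * r ^ 2 ≤ n) {A B : Finset (Finset (Fin n))}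
    (hA : ∀ e ∈ A, e.card = r) (hB : ∀ e ∈ B, e.card = r)
    (hAB : ∀ b ∈ B, Covers b A) (hBA : ∀ a ∈ A, Covers a B)
    (hAne : A.Nonempty) (hBne : B.Nonempty)
    (hns : ¬ ∃ v, (∀ a ∈ A, v ∈ a) ∧ ∀ b ∈ B, v ∈ b) :
    2 * (A.card * B.card) ≤ (n - 1).choose (r - 1) ^ 2 := by
  obtain ⟨a, ha⟩ := hAne
  obtain ⟨b, hb⟩ := hBne
  obtain ⟨s, S, hSc, hS, hsr, hsmin⟩ := exists_min_cover ⟨a, ha⟩ (hAB b hb)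
  obtain ⟨t, T, hTc, hT, htr, htmin⟩ := exists_min_cover ⟨b, hb⟩ (hBA a ha)
  rw [hB b hb] at hsr
  rw [hA a ha] at htr
  have h1 := card_le_of_cover hn hA hB hAB htr htmin hS
  have h2 := card_le_of_cover hn hB hA hBA hsr hsmin hT
  rw [hSc] at h1
  rw [hTc] at h2
  set C := (n - 1).choose (r - 1)
  by_cases hst : s = 0 ∧ t = 0
  · obtain ⟨rfl, rfl⟩ := hst
    obtain ⟨x, rfl⟩ := card_eq_one.1 hSc
    have hxA : ∀ a ∈ A, x ∈ a := fun a ha => by simpa using hS a ha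
    have hex : ∃ b ∈ B, x ∉ b := by
      by_contra hcon
      push Not at hcon
      exact hns ⟨x, hxA, hcon⟩
    obtain ⟨b', hb', hxb'⟩ := hex
    have h3 : 4 * A.card ≤ C := four_mul_card_le hn hA hB hAB (by omega) hxA hb' hxb'
    have h4 : B.card ≤ C := by simpa using h2
    nlinarith [Nat.mul_le_mul h3 h4]
  · have hm := Nat.mul_le_mul h1 h2
    have hp : 2 * ((s + 1) * (t + 1)) ≤ 4 ^ s * 4 ^ t := by
      rcases Nat.eq_zero_or_pos s with h | h
      · have := Nat.mul_le_mul (succ_le_four_pow s)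
          (two_mul_succ_le_four_pow (s := t) (by omega))
        linarith
      · have := Nat.mul_le_mul (two_mul_succ_le_four_pow h) (succ_le_four_pow t)
        linarith
    have hpos : 0 < 4 ^ t * 4 ^ s := by positivity
    refine Nat.le_of_mul_le_mul_left ?_ hpos
    calc 4 ^ t * 4 ^ s * (2 * (A.card * B.card))
        = 2 * (4 ^ t * A.card * (4 ^ s * B.card)) := by ring
      _ ≤ 2 * ((s + 1) * C * ((t + 1) * C)) := Nat.mul_le_mul_left _ hm
      _ = 2 * ((s + 1) * (t + 1)) * C ^ 2 := by ring
      _ ≤ 4 ^ s * 4 ^ t * C ^ 2 := Nat.mul_le_mul_right _ hp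
      _ = _ := by ring

/-! ### Upper bounds for the Ore-degree -/

/-- Some `k` elements of `U` have an `f`-average at most that of `U`; the proof repeatedly deletes
an element with the largest value of `f`. -/
lemma exists_subset_sum_le {α : Type*} [DecidableEq α] (f : α → ℕ) (k m : ℕ) :
    ∀ U : Finset α, U.card = k + m →
      ∃ S ⊆ U, S.card = k ∧ U.card * ∑ v ∈ S, f v ≤ k * ∑ v ∈ U, f v := by
  induction m with
  | zero => intro U hU; exact ⟨U, Subset.rfl, hU, by rw [hU]; simp⟩
  | succ m ih =>
    intro U hU
    obtain ⟨x, hx, hmax⟩ := exists_max_image U f (card_pos.1 (by omega))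
    have hc : (U.erase x).card = k + m := by rw [card_erase_of_mem hx]; omega
    obtain ⟨S, hSU, hSk, hS⟩ := ih (U.erase x) hc
    refine ⟨S, hSU.trans (erase_subset _ _), hSk, ?_⟩
    rcases Nat.eq_zero_or_pos k with rfl | hk
    · simp [card_eq_zero.1 hSk]
    have hsum : ∑ v ∈ U, f v = f x + ∑ v ∈ U.erase x, f v := (add_sum_erase U f hx).symm
    have hle : ∑ v ∈ U.erase x, f v ≤ (k + m) * f x := by
      rw [← hc]
      simpa using sum_le_card_nsmul (U.erase x) f (f x) fun v hv => hmax v (mem_of_mem_erase hv)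
    rw [hc] at hS
    rw [hU, hsum]
    refine Nat.le_of_mul_le_mul_left ?_ (show 0 < k + m by omega)
    calc (k + m) * ((k + (m + 1)) * ∑ v ∈ S, f v)
        = (k + m + 1) * ((k + m) * ∑ v ∈ S, f v) := by ring
      _ ≤ (k + m + 1) * (k * ∑ v ∈ U.erase x, f v) := Nat.mul_le_mul_left _ hS
      _ = k * ((k + m) * ∑ v ∈ U.erase x, f v + ∑ v ∈ U.erase x, f v) := by ring
      _ ≤ k * ((k + m) * ∑ v ∈ U.erase x, f v + (k + m) * f x) := by gcongr
      _ = _ := by ring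

lemma oreDeg_le {n r : ℕ} {H : Finset (Finset (Fin n))} {S : Finset (Fin n)} (hS : S.card = r)
    (hSH : S ∉ H) : oreDeg r H ≤ ∑ v ∈ S, hdeg H v :=
  Nat.sInf_le ⟨S, hS, hSH, rfl⟩

lemma sum_hdeg {n : ℕ} (H : Finset (Finset (Fin n))) (U : Finset (Fin n)) :
    ∑ v ∈ U, hdeg H v = ∑ e ∈ H, (U ∩ e).card := by
  simp only [hdeg, card_filter, ← filter_mem_eq_inter]
  exact sum_comm

/-- The Ore-degree of a family covered by an `r`-set `b` is at most `r` times the average degree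
outside `b`, and the degrees outside `b` add up to at most `(r - 1) |A|` as every edge meets `b`. -/
lemma oreDeg_mul_le {n r : ℕ} (hn : 4 * r ^ 2 ≤ n) {A : Finset (Finset (Fin n))}
    (hA : ∀ e ∈ A, e.card = r) {b : Finset (Fin n)} (hbr : b.card = r) (hb : Covers b A) :
    (n - r) * oreDeg r A ≤ r * ((r - 1) * A.card) := by
  have h2r : 2 * r ≤ n := by nlinarith [Nat.le_self_pow (n := 2) (by norm_num) r]
  have hc : bᶜ.card = n - r := by rw [card_compl, hbr, Fintype.card_fin]
  obtain ⟨S, hSb, hSr, hS⟩ := exists_subset_sum_le (hdeg A) r (n - r - r) bᶜ (by omega)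
  have hSA : S ∉ A := fun h =>
    hb S h (disjoint_right.2 fun x hx => by simpa using hSb hx)
  have hsum : ∑ v ∈ bᶜ, hdeg A v ≤ (r - 1) * A.card := by
    rw [sum_hdeg, mul_comm]
    refine sum_le_card_nsmul A _ _ fun e he => ?_
    obtain ⟨x, hxb, hxe⟩ := not_disjoint_iff.1 (hb e he)
    have : bᶜ ∩ e ⊆ e.erase x := by
      intro y hy
      simp only [mem_inter, mem_compl] at hy
      exact mem_erase.2 ⟨fun h => hy.1 (h ▸ hxb), hy.2⟩
    calc _ ≤ (e.erase x).card := card_le_card this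
      _ = r - 1 := by rw [card_erase_of_mem hxe, hA e he]
  rw [hc] at hS
  calc (n - r) * oreDeg r A ≤ (n - r) * ∑ v ∈ S, hdeg A v :=
        Nat.mul_le_mul_left _ (oreDeg_le hSr hSA)
    _ ≤ r * ∑ v ∈ bᶜ, hdeg A v := hS
    _ ≤ _ := Nat.mul_le_mul_left _ hsum

lemma oreDeg_le_of_star {n r : ℕ} (hn : 4 * r ^ 2 ≤ n) {A : Finset (Finset (Fin n))}
    (hA : ∀ e ∈ A, e.card = r) {v : Fin n} (hv : ∀ e ∈ A, v ∈ e) :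
    oreDeg r A ≤ r * (n - 2).choose (r - 2) := by
  have hn1 : 1 ≤ n := Fin.pos v
  have hle : r ≤ ({v}ᶜ : Finset (Fin n)).card := by
    rw [card_compl, card_singleton, Fintype.card_fin]
    rcases Nat.eq_zero_or_pos r with h | h
    · omega
    · have : r + 1 ≤ n := by nlinarith
      omega
  obtain ⟨S, hSv, hSr⟩ := exists_subset_card_eq hle
  have hvS : v ∉ S := fun h => by simpa using hSv h
  refine (oreDeg_le hSr fun h => hvS (hv S h)).trans ?_
  rw [← hSr, ← smul_eq_mul]
  refine sum_le_card_nsmul S _ _ fun u hu => ?_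
  have huv : u ∉ ({v} : Finset (Fin n)) := by
    rw [mem_singleton]; rintro rfl; exact hvS hu
  have h := card_above_le hA (insert u {v})
  rw [card_insert_of_notMem huv, card_singleton] at h
  rw [hSr]
  refine le_trans (card_le_card fun e he => ?_) h
  simp only [mem_filter] at he
  simp only [above, mem_filter]
  exact ⟨he.1, insert_subset he.2 (by simpa using hv e he.1)⟩

lemma oreDeg_empty {n r : ℕ} (hn : 4 * r ^ 2 ≤ n) :
    oreDeg r (∅ : Finset (Finset (Fin n))) = 0 := by
  have hle : r ≤ (univ : Finset (Fin n)).card := by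
    rw [card_univ, Fintype.card_fin]; nlinarith [Nat.le_self_pow (n := 2) (by norm_num) r]
  obtain ⟨S, -, hSr⟩ := exists_subset_card_eq hle
  have := oreDeg_le hSr (notMem_empty S)
  simpa [hdeg] using this

/-! ### Proof of the theorem -/

/-- Equality holds for `r ≥ 2`; for `r = 1` the truncated `r - 2` only leaves the inequality. -/
lemma pred_mul_choose_le {n r : ℕ} (hr : 1 ≤ r) (hn : 4 * r ^ 2 ≤ n) :
    (r - 1) * (n - 1).choose (r - 1) ≤ (n - 1) * (n - 2).choose (r - 2) := by
  rcases hr.eq_or_lt with rfl | h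
  · simp
  obtain ⟨q, rfl⟩ := Nat.exists_eq_add_of_le' h
  obtain ⟨m, rfl⟩ := Nat.exists_eq_add_of_le' (show 2 ≤ n by nlinarith)
  have := Nat.add_one_mul_choose_eq m q
  have e1 : q + Nat.succ 1 - 1 = q + 1 := by omega
  have e2 : m + 2 - 1 = m + 1 := by omega
  have e3 : q + Nat.succ 1 - 2 = q := by omega
  have e4 : m + 2 - 2 = m := by omega
  rw [e1, e2, e3, e4, this, mul_comm]

theorem stmt14 (n r : ℕ) (hn : 4*r^2 ≤ n)
    (A B : Finset (Finset (Fin n)))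
    (hA : ∀ e ∈ A, e.card = r) (hB : ∀ e ∈ B, e.card = r)
    (hcross : ∀ a ∈ A, ∀ b ∈ B, (a ∩ b).Nonempty) :
    oreDeg r A * oreDeg r B ≤ r^2 * ((n-2).choose (r-2))^2 := by
  rcases A.eq_empty_or_nonempty with rfl | hAne
  · simp [oreDeg_empty hn]
  rcases B.eq_empty_or_nonempty with rfl | hBne
  · simp [oreDeg_empty hn]
  by_cases hstar : ∃ v, (∀ a ∈ A, v ∈ a) ∧ ∀ b ∈ B, v ∈ b
  · obtain ⟨v, hvA, hvB⟩ := hstar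
    have := Nat.mul_le_mul (oreDeg_le_of_star hn hA hvA) (oreDeg_le_of_star hn hB hvB)
    rwa [← pow_two, mul_pow] at this
  have hBA : ∀ a ∈ A, Covers a B := fun a ha b hb =>
    not_disjoint_iff_nonempty_inter.2 (hcross a ha b hb)
  have hAB : ∀ b ∈ B, Covers b A := fun b hb a ha =>
    fun h => hBA a ha b hb h.symm
  have h2 := two_mul_card_mul_card_le hn hA hB hAB hBA hAne hBne hstar
  obtain ⟨a, ha⟩ := hAne
  obtain ⟨b, hb⟩ := hBne
  have hr : 1 ≤ r := by
    rw [← hA a ha]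
    exact card_pos.2 ((hcross a ha b hb).mono inter_subset_left)
  have h3 := Nat.mul_le_mul (oreDeg_mul_le hn hA (hB b hb) (hAB b hb))
    (oreDeg_mul_le hn hB (hA a ha) (hBA a ha))
  have h4 := Nat.pow_le_pow_left (pred_mul_choose_le hr hn) 2
  have hrr : 1 * r ≤ r * r := Nat.mul_le_mul_right r hr
  -- The loss `((n - 1) / (n - r))²` from averaging outside an `r`-set is at most `2`.
  have h5 : (n - 1) ^ 2 ≤ 2 * (n - r) ^ 2 := by
    have h6 : 3 * (n - 1) ≤ 4 * (n - r) := by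
      have : 4 * r ≤ n := by nlinarith
      omega
    nlinarith [Nat.mul_le_mul h6 h6]
  have hpos : 0 < 2 * (n - r) ^ 2 := by
    have : 0 < n - r := by
      have : 4 * r ≤ n := by nlinarith
      omega
    positivity
  refine Nat.le_of_mul_le_mul_left ?_ hpos
  calc 2 * (n - r) ^ 2 * (oreDeg r A * oreDeg r B)
      = 2 * ((n - r) * oreDeg r A * ((n - r) * oreDeg r B)) := by ring
    _ ≤ 2 * (r * ((r - 1) * A.card) * (r * ((r - 1) * B.card))) := Nat.mul_le_mul_left _ h3
    _ = r ^ 2 * (r - 1) ^ 2 * (2 * (A.card * B.card)) := by ring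
    _ ≤ r ^ 2 * (r - 1) ^ 2 * (n - 1).choose (r - 1) ^ 2 := Nat.mul_le_mul_left _ h2
    _ = r ^ 2 * ((r - 1) * (n - 1).choose (r - 1)) ^ 2 := by ring
    _ ≤ r ^ 2 * ((n - 1) * (n - 2).choose (r - 2)) ^ 2 := Nat.mul_le_mul_left _ h4
    _ = (n - 1) ^ 2 * (r ^ 2 * (n - 2).choose (r - 2) ^ 2) := by ring
    _ ≤ 2 * (n - r) ^ 2 * (r ^ 2 * (n - 2).choose (r - 2) ^ 2) := Nat.mul_le_mul_right _ h5
end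

section
/- Let n > rs and let H be an r-uniform hypergraph on n vertices with no matching of size s such that for every r-set S not in H one has Σ_{v∈S} deg(v) > r·(C(n-1, r-1) − C(n-s, r-1)). Then the maximum degree of H satisfies: if every hypergraph on fewer vertices (at least 3r²(s−2)+1 vertices) with the corresponding Ore-degree condition for s−1 has a matching of size s−1, then Δ(H) ≤ r(s−1)·C(n-2, r-2). -/
/-!
The degree bound rests on an Ore-type matching theorem, `ore_matching`: an `r`-uniform hypergraph
(`r ≥ 2`) on at least `r (r - 1) s + 1` vertices satisfying the Ore condition for `s` has a matching
of size `s`. Deleting a vertex `v` turns the Ore condition for `s` into the one for `s - 1`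
(`ore_erase`), so if `n - 1` is large enough then `H - v` has a matching of size `s - 1`, and a
vertex `v` of degree above `r (s - 1) C(n - 2, r - 2)` would extend it (`extend_matching`). If `n - 1`
is smaller, the trivial bound `deg v ≤ C(n - 1, r - 1)` is already good enough.

`ore_matching` is proved by induction on `s`. Suppose that `H` has no matching of size `s = σ + 1`. By
`ore_erase` and the induction hypothesis every vertex is avoided by some matching of size `σ`. Let `M`
be one of these, let `P` contain its vertices, and let `Q` be the complement of `P`. No edge lies
inside `Q`, so averaging the Ore condition over the `r`-subsets of `Q` bounds the degree sum over `Q`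
from below (`ore_average`). For the upper bound the edges are sorted by the size of their trace on `P`:

* Edges with at least two vertices in `P` are bounded by symmetrization: if any `K + 1` members of
  a system of templates include a matching of size `s`, then no permutation of the vertices maps more
  than `K` of them into `H` (`averaging`), and cyclic intervals provide such templates (`circle_lemma`, `type_bound`).
* Edges with one vertex in `P` are counted through the links in `Q` of the vertices of `M`. Links of
  two vertices of the same edge of `M` are cross-intersecting, so a consequence of the Kruskal–Katona
  theorem leaves two cases for each edge (`block_dichotomy`): the links are jointly small, or only one
  vertex has a non-empty link, which is then limited by a matching that avoids that vertex
  (`link_single`).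

Except for `r = 3` these estimates contradict the lower bound (`ore_step_of_ne_three`). For `r = 3`
the two kinds of edges are bounded jointly, by symmetrizing a system that contains templates of
both kinds (`templates`, `ore_step_three`).
-/

open Finset

/-! ### Symmetrization -/

/-- `H` contains a matching of size `s`, in the sense of the statement: `s` distinct members any two
of which are disjoint. -/
def HasM {α : Type*} (H : Finset (Finset α)) (s : ℕ) : Prop :=
  ∃ M ⊆ H, M.card = s ∧ ∀ e ∈ M, ∀ f ∈ M, e ≠ f → Disjoint e f

lemma hasM_of_indexed {α ι : Type*} [DecidableEq α] {H : Finset (Finset α)} (S : Finset ι)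
    (F : ι → Finset α) (hF : ∀ i ∈ S, F i ∈ H)
    (hd : ∀ i ∈ S, ∀ j ∈ S, i ≠ j → Disjoint (F i) (F j))
    (hne : ∀ i ∈ S, (F i).Nonempty) : HasM H #S := by
  refine ⟨S.image F, ?_, ?_, ?_⟩
  · intro e he
    obtain ⟨i, hi, rfl⟩ := mem_image.1 he
    exact hF i hi
  · apply card_image_of_injOn
    intro i hi j hj hij
    by_contra h
    have := hd i hi j hj h
    change F i = F j at hij
    rw [hij, disjoint_self] at this
    exact (hne j hj).ne_empty this
  · intro e he f hf hef
    obtain ⟨i, hi, rfl⟩ := mem_image.1 he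
    obtain ⟨j, hj, rfl⟩ := mem_image.1 hf
    exact hd i hi j hj (fun h => hef (by rw [h]))

section Avg
variable {α γ : Type*} [DecidableEq α] [Fintype α] [DecidableEq γ]

/-- Two sets with the same number of points of each colour differ by a colour-preserving permutation. -/
lemma exists_perm_of_colour (c : α → γ) (f₀ f : Finset α)
    (h : ∀ k, #{x ∈ f | c x = k} = #{x ∈ f₀ | c x = k}) :
    ∃ g : Equiv.Perm α, (∀ x, c (g x) = c x) ∧ f₀.map g.toEmbedding = f := by
  have key : ∀ k : γ × Bool, Nonempty ({x // (c x, decide (x ∈ f₀)) = k} ≃ {x // (c x, decide (x ∈ f)) = k}) := by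
    rintro ⟨k, b⟩
    refine ⟨Fintype.equivOfCardEq ?_⟩
    rw [Fintype.card_subtype, Fintype.card_subtype]
    have e1 : ∀ f : Finset α, #{x | (c x, decide (x ∈ f)) = (k, true)} = #{x ∈ f | c x = k} := by
      intro f; congr 1; ext x; simp [and_comm]
    have e2 : ∀ f : Finset α, #{x | (c x, decide (x ∈ f)) = (k, false)} + #{x ∈ f | c x = k} = #{x | c x = k} := by
      intro f
      rw [← card_union_of_disjoint]
      · congr 1; ext x; by_cases hx : x ∈ f <;> simp [hx]
      · rw [disjoint_left]; intro x; simp +contextual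
    cases b
    · have := e2 f; have := e2 f₀; have := h k; omega
    · rw [e1, e1, h]
  let e := fun k => (key k).some
  have := Equiv.ofFiberEquiv_map (f := fun x => (c x, decide (x ∈ f₀)))
    (g := fun x => (c x, decide (x ∈ f))) e
  set g := Equiv.ofFiberEquiv (f := fun x => (c x, decide (x ∈ f₀)))
    (g := fun x => (c x, decide (x ∈ f))) e
  have h1 : ∀ x, c (g x) = c x := fun x => (Prod.ext_iff.1 (this x)).1
  have h2 : ∀ x, (g x ∈ f ↔ x ∈ f₀) := fun x => by
    have := (Prod.ext_iff.1 (this x)).2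
    simpa using this
  refine ⟨g, h1, ?_⟩
  ext y
  simp only [mem_map_equiv]
  rw [← h2, Equiv.apply_symm_apply]

/-- Orbit counting for the group of colour-preserving permutations: the proportion of `g` that send
`f₀` into `H` equals the proportion of members of `H` among the sets with the colour profile
of `f₀`. -/
lemma orbit_count (c : α → γ) (H : Finset (Finset α)) (f₀ : Finset α) :
    #{g : Equiv.Perm α | (∀ x, c (g x) = c x) ∧ f₀.map g.toEmbedding ∈ H} *
      #{f : Finset α | ∀ x, #{y ∈ f | c y = c x} = #{y ∈ f₀ | c y = c x}} =
    #{g : Equiv.Perm α | ∀ x, c (g x) = c x} *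
      #{f ∈ H | ∀ x, #{y ∈ f | c y = c x} = #{y ∈ f₀ | c y = c x}} := by
  classical
  set G : Finset (Equiv.Perm α) := {g : Equiv.Perm α | ∀ x, c (g x) = c x} with hG
  set K := #{g ∈ G | f₀.map g.toEmbedding = f₀} with hK
  have hcol : ∀ g ∈ G, ∀ f : Finset α, ∀ k, #{y ∈ f.map g.toEmbedding | c y = k} = #{y ∈ f | c y = k} := by
    intro g hg f k
    rw [filter_map, card_map]
    congr 1
    apply filter_congr
    intro x _
    have : c (g x) = c x := by simp [hG] at hg; exact hg x
    simp [this]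
  have hconst : ∀ f : Finset α, (∀ x, #{y ∈ f | c y = c x} = #{y ∈ f₀ | c y = c x}) →
      #{g ∈ G | f₀.map g.toEmbedding = f} = K := by
    intro f hf
    obtain ⟨h, h1, h2⟩ := exists_perm_of_colour c f₀ f (by
      intro k
      by_cases hk : ∃ x, c x = k
      · obtain ⟨x, rfl⟩ := hk; exact hf x
      · push Not at hk
        simp [hk])
    symm
    have hs : ∀ x, c (h.symm x) = c x := fun x => by
      rw [← h1 (h.symm x), Equiv.apply_symm_apply]
    -- all fibres of `g ↦ g f₀` over the profile of `f₀` are translates of the stabilizer of `f₀`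
    apply card_bij (fun g _ => g.trans h)
    · intro g hg
      simp only [hG, mem_filter, mem_univ, true_and] at hg ⊢
      refine ⟨fun x => by simp [h1, hg.1], ?_⟩
      rw [← h2]
      conv_rhs => rw [← hg.2]
      ext y; simp only [mem_map_equiv, Equiv.symm_trans_apply]
    · intro a _ b _ hab
      ext x
      simpa using congrArg (fun e : Equiv.Perm α => e x) hab
    · intro g hg
      simp only [hG, mem_filter, mem_univ, true_and] at hg
      refine ⟨g.trans h.symm, ?_, by ext; simp⟩
      simp only [hG, mem_filter, mem_univ, true_and]
      refine ⟨fun x => by simp [hs, hg.1], ?_⟩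
      have : f.map h.symm.toEmbedding = f₀ := by
        rw [← h2]; ext y; simp only [mem_map_equiv, Equiv.symm_symm, Equiv.symm_apply_apply]
      calc f₀.map (g.trans h.symm).toEmbedding
          = (f₀.map g.toEmbedding).map h.symm.toEmbedding := by
            ext y; simp only [mem_map_equiv, Equiv.symm_trans_apply]
        _ = f₀ := by rw [hg.2, this]
  have hcount : ∀ H' : Finset (Finset α), #{g ∈ G | f₀.map g.toEmbedding ∈ H'} =
      #{f ∈ H' | ∀ x, #{y ∈ f | c y = c x} = #{y ∈ f₀ | c y = c x}} * K := by
    intro H'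
    rw [card_eq_sum_card_fiberwise (f := fun g : Equiv.Perm α => f₀.map g.toEmbedding)
      (t := {f ∈ H' | ∀ x, #{y ∈ f | c y = c x} = #{y ∈ f₀ | c y = c x}})]
    · rw [← smul_eq_mul, ← sum_const]
      apply sum_congr rfl
      intro f hf
      rw [mem_filter] at hf
      rw [← hconst f hf.2, filter_filter]
      congr 1
      apply filter_congr
      intro g _
      constructor
      · rintro ⟨_, h⟩; exact h
      · intro h; exact ⟨h ▸ hf.1, h⟩
    · intro g hg
      simp only [coe_filter, Set.mem_ofPred_eq] at hg ⊢
      exact ⟨hg.2, fun x => hcol g hg.1 _ _⟩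
  have h1 := hcount H
  have h2 := hcount univ
  simp only [mem_univ, filter_true] at h2
  rw [← filter_filter, ← hG, h1, h2]
  ring
end Avg

section Types
variable {α ι : Type*} [DecidableEq α] [Fintype α]

/-- The type of `f₀` relative to `P` and `Q`: all sets meeting `P` and `Q` in as many points as `f₀`
and agreeing with `f₀` outside `P ∪ Q`. -/
def Fam (P Q f₀ : Finset α) : Finset (Finset α) :=
  {f | #(f ∩ P) = #(f₀ ∩ P) ∧ #(f ∩ Q) = #(f₀ ∩ Q) ∧ f \ (P ∪ Q) = f₀ \ (P ∪ Q)}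

lemma card_Fam {P Q : Finset α} (h : Disjoint P Q) (f₀ : Finset α) :
    #(Fam P Q f₀) = (#P).choose #(f₀ ∩ P) * (#Q).choose #(f₀ ∩ Q) := by
  rw [← card_powersetCard, ← card_powersetCard, ← card_product]
  have hd := disjoint_left.1 h
  apply card_bij' (fun f _ => (f ∩ P, f ∩ Q)) (fun p _ => p.1 ∪ p.2 ∪ f₀ \ (P ∪ Q))
  · intro f hf
    simp only [Fam, mem_filter, mem_univ, true_and] at hf
    simp [mem_powersetCard, hf.1, hf.2.1, inter_subset_right]
  · rintro ⟨a, b⟩ hab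
    simp only [mem_product, mem_powersetCard] at hab
    obtain ⟨⟨h1, h2⟩, h3, h4⟩ := hab
    have e1 : (a ∪ b ∪ f₀ \ (P ∪ Q)) ∩ P = a := by grind
    have e2 : (a ∪ b ∪ f₀ \ (P ∪ Q)) ∩ Q = b := by grind
    simp only [Fam, mem_filter, mem_univ, true_and]
    rw [e1, e2]
    refine ⟨h2, h4, by grind⟩
  · intro f hf
    simp only [Fam, mem_filter, mem_univ, true_and] at hf
    rw [← hf.2.2]
    ext x; simp only [mem_union, mem_inter, mem_sdiff]; tauto
  · rintro ⟨a, b⟩ hab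
    simp only [mem_product, mem_powersetCard] at hab
    obtain ⟨⟨h1, h2⟩, h3, h4⟩ := hab
    ext x <;> grind

/-- The colouring with classes `P`, `Q` (off `P`) and the singletons outside `P ∪ Q`; for disjoint
`P` and `Q` the colour-preserving permutations are those that fix every point outside `P ∪ Q` and
map `P` and `Q` to themselves. -/
def colour (P Q : Finset α) (x : α) : Bool ⊕ α :=
  if x ∈ P then Sum.inl true else if x ∈ Q then Sum.inl false else Sum.inr x

lemma mem_Fam_iff {P Q : Finset α} (h : Disjoint P Q) (f₀ f : Finset α) :
    f ∈ Fam P Q f₀ ↔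
      ∀ x, #{y ∈ f | colour P Q y = colour P Q x} = #{y ∈ f₀ | colour P Q y = colour P Q x} := by
  have hd := disjoint_left.1 h
  have c1 : ∀ x ∈ P, ∀ f : Finset α, {y ∈ f | colour P Q y = colour P Q x} = f ∩ P := by
    intro x hx f; ext y
    simp only [mem_filter, mem_inter, colour, hx, if_true]
    split_ifs <;> simp_all
  have c2 : ∀ x ∈ Q, ∀ f : Finset α, {y ∈ f | colour P Q y = colour P Q x} = f ∩ Q := by
    intro x hx f; ext y
    have hx' : x ∉ P := fun h' => hd h' hx
    simp only [mem_filter, mem_inter, colour, hx, hx', if_true, if_false]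
    have := @hd y
    split_ifs <;> simp_all
  have c3 : ∀ x, x ∉ P → x ∉ Q → ∀ f : Finset α,
      #{y ∈ f | colour P Q y = colour P Q x} = if x ∈ f then 1 else 0 := by
    intro x hx hx' f
    have : {y ∈ f | colour P Q y = colour P Q x} = if x ∈ f then {x} else ∅ := by
      ext y
      simp only [mem_filter, colour, hx, hx', if_false]
      by_cases hxy : y = x
      · subst hxy; simp [hx, hx']; split_ifs <;> simp_all
      · split_ifs <;> simp_all
    rw [this]; split_ifs <;> simp
  simp only [Fam, mem_filter, mem_univ, true_and]
  constructor
  · rintro ⟨h1, h2, h3⟩ x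
    by_cases hP : x ∈ P
    · rw [c1 x hP, c1 x hP, h1]
    by_cases hQ : x ∈ Q
    · rw [c2 x hQ, c2 x hQ, h2]
    rw [c3 x hP hQ, c3 x hP hQ]
    have := Finset.ext_iff.1 h3 x
    simp only [mem_sdiff, mem_union, hP, hQ, or_self, not_false_eq_true, and_true] at this
    simp [this]
  · intro hx
    refine ⟨?_, ?_, ?_⟩
    · rcases P.eq_empty_or_nonempty with rfl | ⟨x, hP⟩
      · simp
      · rw [← c1 x hP, hx, c1 x hP]
    · rcases Q.eq_empty_or_nonempty with rfl | ⟨x, hP⟩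
      · simp
      · rw [← c2 x hP, hx, c2 x hP]
    · ext x
      simp only [mem_sdiff, mem_union, not_or]
      constructor
      · rintro ⟨a, b, c⟩
        have := hx x
        rw [c3 x b c, c3 x b c, if_pos a] at this
        refine ⟨?_, b, c⟩
        by_contra hh; simp [hh] at this
      · rintro ⟨a, b, c⟩
        have := hx x
        rw [c3 x b c, c3 x b c, if_pos a] at this
        refine ⟨?_, b, c⟩
        by_contra hh; simp [hh] at this

/-- The symmetrization principle. Let `F i`, `i ∈ T`, be template sets such that more than `K` of them
always include `s` pairwise disjoint ones. If `H` has no `s`-matching, then at most `K` templates lie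
in `H` after any permutation of `P` and of `Q`, so averaging over these permutations bounds by `K`
the sum over `i` of the density of `H` in the type of `F i`. -/
lemma averaging {P Q : Finset α} (h : Disjoint P Q) {H : Finset (Finset α)} {s : ℕ}
    (hno : ¬ HasM H s) (T : Finset ι) (F : ι → Finset α) (hne : ∀ i ∈ T, (F i).Nonempty) (K : ℕ)
    (hcomb : ∀ A ⊆ T, K < #A → ∃ S ⊆ A, #S = s ∧ ∀ i ∈ S, ∀ j ∈ S, i ≠ j → Disjoint (F i) (F j)) :
    ∑ i ∈ T, (#(H ∩ Fam P Q (F i)) : ℚ) /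
      ((#P).choose #(F i ∩ P) * (#Q).choose #(F i ∩ Q) : ℕ) ≤ K := by
  classical
  set c := colour P Q
  set G : Finset (Equiv.Perm α) := {g : Equiv.Perm α | ∀ x, c (g x) = c x} with hG
  have hGpos : (0 : ℚ) < #G := by
    rw [Nat.cast_pos, card_pos]
    exact ⟨1, by simp [hG]⟩
  have key : ∀ i ∈ T, (#(H ∩ Fam P Q (F i)) : ℚ) /
      ((#P).choose #(F i ∩ P) * (#Q).choose #(F i ∩ Q) : ℕ) * #G =
      #{g ∈ G | (F i).map g.toEmbedding ∈ H} := by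
    intro i _
    have := orbit_count c H (F i)
    have e1 : ({f ∈ H | ∀ x, #{y ∈ f | c y = c x} = #{y ∈ F i | c y = c x}} : Finset _) =
        H ∩ Fam P Q (F i) := by
      ext f; rw [mem_filter, mem_inter, mem_Fam_iff h]
    have e2 : ({f | ∀ x, #{y ∈ f | c y = c x} = #{y ∈ F i | c y = c x}} : Finset (Finset α)) =
        Fam P Q (F i) := by
      ext f; simp [mem_Fam_iff h, c]
    rw [e1, e2, ← filter_filter, ← hG, card_Fam h] at this
    have hpos : (0 : ℚ) < ((#P).choose #(F i ∩ P) * (#Q).choose #(F i ∩ Q) : ℕ) := by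
      rw [Nat.cast_pos]
      exact Nat.mul_pos (Nat.choose_pos (card_le_card inter_subset_right))
        (Nat.choose_pos (card_le_card inter_subset_right))
    rw [div_mul_eq_mul_div, div_eq_iff hpos.ne', mul_comm]
    exact_mod_cast this.symm
  rw [← mul_le_mul_iff_left₀ hGpos, sum_mul, sum_congr rfl key]
  have : ∑ i ∈ T, #{g ∈ G | (F i).map g.toEmbedding ∈ H} =
      ∑ g ∈ G, #{i ∈ T | (F i).map g.toEmbedding ∈ H} := by
    simp only [card_filter]
    rw [sum_comm]
  rw [← Nat.cast_sum, this]
  have : ∑ g ∈ G, #{i ∈ T | (F i).map g.toEmbedding ∈ H} ≤ #G * K := by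
    rw [← smul_eq_mul, ← sum_const]
    apply sum_le_sum
    intro g _
    by_contra hlt
    push Not at hlt
    obtain ⟨S, hS, rfl, hd⟩ := hcomb _ (filter_subset _ _) hlt
    apply hno
    apply hasM_of_indexed S (fun i => (F i).map g.toEmbedding)
    · intro i hi; exact (mem_filter.1 (hS hi)).2
    · intro i hi j hj hij
      rw [disjoint_map]; exact hd i hi j hj hij
    · intro i hi
      exact (hne i (mem_filter.1 (hS hi)).1).map
  rw [mul_comm]
  exact_mod_cast this
end Types

/-! ### The circle argument -/

/-- More than `j σ` points on a circle of length `j (σ + 1) + d` include `σ + 1` points at pairwise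
cyclic distance at least `j`. For `d = 0` fewer than `j` points are missing, so some residue class
modulo `j` is entirely present; for larger `d` a missing point, if there is one, is cut out of the
circle. -/
lemma circle_lemma (j σ : ℕ) (hj : 1 ≤ j) (d : ℕ) : ∀ A ⊆ range (j * (σ + 1) + d), j * σ < #A →
    ∃ S ⊆ A, #S = σ + 1 ∧
      ∀ x ∈ S, ∀ y ∈ S, x < y → x + j ≤ y ∧ y + j ≤ j * (σ + 1) + d + x := by
  have hinj : ∀ i, Function.Injective fun t => i + j * t := by
    intro i a b hab
    have : j * a = j * b := by simpa using hab
    exact Nat.eq_of_mul_eq_mul_left hj this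
  have hgap : ∀ i t t', t ≤ σ → t' ≤ σ → i + j * t < i + j * t' →
      i + j * t + j ≤ i + j * t' ∧ i + j * t' + j ≤ j * (σ + 1) + (i + j * t) := by
    intro i t t' ht ht' h
    have h1 : t < t' := by
      by_contra hh
      have := Nat.mul_le_mul_left j (not_lt.1 hh)
      omega
    have h2 := Nat.mul_le_mul_left j (Nat.succ_le_of_lt h1)
    have h3 := Nat.mul_le_mul_left j (Nat.succ_le_succ ht')
    simp only [Nat.succ_eq_add_one, mul_add, mul_one] at h2 h3 ⊢
    omega
  induction d with
  | zero =>
    intro A hA hcard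
    by_cases h : ∃ i < j, ∀ t ≤ σ, i + j * t ∈ A
    · obtain ⟨i, hi, ht⟩ := h
      refine ⟨(range (σ + 1)).image fun t => i + j * t, ?_, ?_, ?_⟩
      · intro x hx
        obtain ⟨t, h, rfl⟩ := mem_image.1 hx
        exact ht t (by simpa [Nat.lt_succ_iff] using h)
      · rw [card_image_of_injective _ (hinj i), card_range]
      · intro x hx y hy hxy
        obtain ⟨t, h, rfl⟩ := mem_image.1 hx
        obtain ⟨t', h', rfl⟩ := mem_image.1 hy
        simp only [mem_range, Nat.lt_succ_iff] at h h'
        simpa using hgap i t t' h h' hxy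
    · exfalso
      push Not at h
      choose! t ht htA using h
      have hsub : (range j).image (fun i => i + j * t i) ⊆ range (j * (σ + 1) + 0) \ A := by
        intro x hx
        obtain ⟨i, hi, rfl⟩ := mem_image.1 hx
        rw [mem_range] at hi
        rw [mem_sdiff, mem_range]
        refine ⟨?_, htA i hi⟩
        have := Nat.mul_le_mul_left j (ht i hi)
        rw [mul_add]; omega
      have hc := card_le_card hsub
      rw [card_image_of_injOn, card_range, card_sdiff_of_subset hA, card_range] at hc
      · have := card_le_card hA
        rw [card_range] at this
        rw [mul_add] at hc this; omega
      · intro a ha b hb hab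
        simp only [coe_range, Set.mem_Iio] at ha hb
        have := congrArg (· % j) hab
        simpa [Nat.mod_eq_of_lt ha, Nat.mod_eq_of_lt hb] using this
  | succ d ih =>
    intro A hA hcard
    by_cases hfull : A = range (j * (σ + 1) + (d + 1))
    · refine ⟨(range (σ + 1)).image fun t => 0 + j * t, ?_, ?_, ?_⟩
      · intro x hx
        obtain ⟨t, h, rfl⟩ := mem_image.1 hx
        rw [hfull, mem_range]
        rw [mem_range] at h
        have := Nat.mul_le_mul_left j h.le
        omega
      · rw [card_image_of_injective _ (hinj 0), card_range]
      · intro x hx y hy hxy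
        obtain ⟨t, h, rfl⟩ := mem_image.1 hx
        obtain ⟨t', h', rfl⟩ := mem_image.1 hy
        simp only [mem_range, Nat.lt_succ_iff] at h h'
        have := hgap 0 t t' h h' hxy
        omega
    · obtain ⟨a, ha, haA⟩ : ∃ a ∈ range (j * (σ + 1) + (d + 1)), a ∉ A := by
        by_contra h
        push Not at h
        exact hfull (subset_antisymm hA h)
      -- deleting the unused point `a` from the circle can only shrink gaps
      let φ : ℕ → ℕ := fun x => if a < x then x - 1 else x
      have hne : ∀ x ∈ A, x ≠ a := fun x hx h => haA (h ▸ hx)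
      have hφ : Set.InjOn φ A := by
        intro x hx y hy hxy
        have h1 := hne x hx
        have h2 := hne y hy
        simp only [φ] at hxy
        split_ifs at hxy <;> omega
      obtain ⟨S', hS', hc, hg⟩ := ih (A.image φ) (by
        intro y hy
        obtain ⟨x, hx, rfl⟩ := mem_image.1 hy
        have h1 := hne x hx
        have h2 := mem_range.1 (hA hx)
        rw [mem_range] at ha ⊢
        simp only [φ]
        split_ifs <;> omega) (by rwa [card_image_of_injOn hφ])
      refine ⟨{x ∈ A | φ x ∈ S'}, filter_subset _ _, ?_, ?_⟩
      · rw [← hc, ← card_image_of_injOn (s := {x ∈ A | φ x ∈ S'}) (f := φ)]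
        · congr 1
          ext y
          simp only [mem_image, mem_filter]
          constructor
          · rintro ⟨x, ⟨_, h⟩, rfl⟩; exact h
          · intro hy
            obtain ⟨x, hx, rfl⟩ := mem_image.1 (hS' hy)
            exact ⟨x, ⟨hx, hy⟩, rfl⟩
        · intro x hx y hy
          simp only [coe_filter, Set.mem_ofPred_eq] at hx hy
          exact hφ hx.1 hy.1
      · intro x hx y hy hxy
        rw [mem_filter] at hx hy
        have h1 := hne x hx.1
        have h2 := hne y hy.1
        have := hg _ hx.2 _ hy.2 (by simp only [φ]; split_ifs <;> omega)
        simp only [φ] at this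
        split_ifs at this <;> omega

/-- The cyclic interval of length `l` starting at `b` in `ℤ/M`, with representatives in `range M`. -/
def cyc (M b l : ℕ) : Finset ℕ := (range l).image fun t => (b + t) % M

lemma cyc_subset {M b l : ℕ} (h : l ≤ M) : cyc M b l ⊆ range M := by
  intro x hx
  obtain ⟨t, ht, rfl⟩ := mem_image.1 hx
  rw [mem_range] at ht ⊢
  exact Nat.mod_lt _ (by omega)

lemma card_cyc {M b l : ℕ} (h : l ≤ M) : #(cyc M b l) = l := by
  rw [cyc, card_image_of_injOn, card_range]
  intro x hx y hy hxy
  simp only [coe_range, Set.mem_Iio] at hx hy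
  exact Nat.ModEq.eq_of_lt_of_lt (Nat.ModEq.add_left_cancel' b hxy) (hx.trans_le h) (hy.trans_le h)

lemma disjoint_cyc {M x y l : ℕ} (h1 : x + l ≤ y) (h2 : y + l ≤ M + x) :
    Disjoint (cyc M x l) (cyc M y l) := by
  rw [disjoint_left]
  intro a ha hb
  obtain ⟨t, ht, rfl⟩ := mem_image.1 ha
  obtain ⟨t', ht', h⟩ := mem_image.1 hb
  rw [mem_range] at ht ht'
  have : M ∣ y + t' - (x + t) := (Nat.modEq_iff_dvd' (by omega)).1 h.symm
  have := Nat.le_of_dvd (by omega) this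
  omega

/-- An enumeration of a finset by an initial segment of `ℕ`. -/
lemma exists_enum {α : Type*} [DecidableEq α] [Nonempty α] (P : Finset α) :
    ∃ e : ℕ → α, Set.InjOn e (range #P) ∧ (range #P).image e = P := by
  classical
  refine ⟨fun i => if h : i < #P then (P.equivFin.symm ⟨i, h⟩ : α) else Classical.arbitrary α, ?_, ?_⟩
  · intro x hx y hy hxy
    simp only [coe_range, Set.mem_Iio] at hx hy
    simp only [hx, hy, dif_pos] at hxy
    have := P.equivFin.symm.injective (Subtype.ext hxy)
    simpa using this
  · ext x
    simp only [mem_image, mem_range]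
    constructor
    · rintro ⟨i, hi, rfl⟩
      simp [hi]
    · intro hx
      refine ⟨P.equivFin ⟨x, hx⟩, Fin.is_lt _, ?_⟩
      simp

section
variable {α : Type*} [DecidableEq α]

lemma image_enum_disj {e : ℕ → α} {m : ℕ} (he : Set.InjOn e (range m)) {X Y : Finset ℕ}
    (hX : X ⊆ range m) (hY : Y ⊆ range m) (h : Disjoint X Y) : Disjoint (X.image e) (Y.image e) := by
  rw [disjoint_left]
  intro a ha hb
  obtain ⟨t, ht, rfl⟩ := mem_image.1 ha
  obtain ⟨t', ht', h'⟩ := mem_image.1 hb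
  have := he (hY ht') (hX ht) h'
  subst this
  exact disjoint_left.1 h ht ht'

/-- For `r`-uniform `H` on `P ∪ Q` without a `(σ + 1)`-matching, the edges meeting `P` in exactly `j`
points have density at most `j σ / #P`. The templates are cyclic intervals of length `j` in `P`
paired with cyclic intervals of length `r - j` in `Q` that advance by `h` at each step; starting points
at distance at least `j` give disjoint templates because `r - j ≤ j h`, so `circle_lemma` applies. -/
lemma type_bound [Fintype α] {P Q : Finset α} (hPQ : Disjoint P Q) {H : Finset (Finset α)} {r j h σ : ℕ}
    (hno : ¬ HasM H (σ + 1)) (hH : ∀ f ∈ H, #f = r ∧ f ⊆ P ∪ Q) (hj : 1 ≤ j) (hjr : j ≤ r)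
    (hjs : j * (σ + 1) ≤ #P) (hh : r - j ≤ j * h) (hcap : #P * h ≤ #Q) :
    #{f ∈ H | #(f ∩ P) = j} * #P ≤ j * σ * ((#P).choose j * (#Q).choose (r - j)) := by
  have hP : 1 ≤ #P := (Nat.mul_pos hj (Nat.succ_pos σ)).trans_le hjs
  have hjP : j ≤ #P := (Nat.le_mul_of_pos_right j (Nat.succ_pos σ)).trans hjs
  obtain ⟨p, hp⟩ := card_pos.1 hP
  have : Nonempty α := ⟨p⟩
  obtain ⟨eP, iP, rP⟩ := exists_enum P
  obtain ⟨eQ, iQ, rQ⟩ := exists_enum Q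
  have hl : r - j ≤ #P * h := hh.trans (Nat.mul_le_mul_right h hjP)
  have sP : ∀ a, cyc #P a j ⊆ range #P := fun a => cyc_subset hjP
  have sQ : ∀ a, cyc (#P * h) (a * h) (r - j) ⊆ range #Q := fun a =>
    (cyc_subset hl).trans (range_subset_range.2 hcap)
  have tP : ∀ a, (cyc #P a j).image eP ⊆ P := fun a => by
    conv_rhs => rw [← rP]
    exact image_subset_image (sP a)
  have tQ : ∀ a, (cyc (#P * h) (a * h) (r - j)).image eQ ⊆ Q := fun a => by
    conv_rhs => rw [← rQ]
    exact image_subset_image (sQ a)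
  have cP : ∀ a, #((cyc #P a j).image eP) = j := fun a => by
    rw [card_image_of_injOn, card_cyc hjP]
    exact iP.mono (by exact_mod_cast sP a)
  have cQ : ∀ a, #((cyc (#P * h) (a * h) (r - j)).image eQ) = r - j := fun a => by
    rw [card_image_of_injOn, card_cyc hl]
    exact iQ.mono (by exact_mod_cast sQ a)
  set F : ℕ → Finset α := fun a =>
    (cyc #P a j).image eP ∪ (cyc (#P * h) (a * h) (r - j)).image eQ with hF
  have hd := disjoint_left.1 hPQ
  have FP : ∀ a, F a ∩ P = (cyc #P a j).image eP := fun a => by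
    have := tP a; have := tQ a; simp only [hF]; grind
  have FQ : ∀ a, F a ∩ Q = (cyc (#P * h) (a * h) (r - j)).image eQ := fun a => by
    have := tP a; have := tQ a; simp only [hF]; grind
  have hdis : ∀ x y, x < y → x + j ≤ y → y + j ≤ #P + x → Disjoint (F x) (F y) := by
    intro x y _ h1 h2
    have h1' : x * h + (r - j) ≤ y * h := by
      have := Nat.mul_le_mul_right h h1
      rw [add_mul] at this; omega
    have h2' : y * h + (r - j) ≤ #P * h + x * h := by
      have := Nat.mul_le_mul_right h h2
      rw [add_mul, add_mul] at this; omega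
    have d1 := image_enum_disj iP (sP x) (sP y) (disjoint_cyc h1 h2)
    have d2 := image_enum_disj iQ (sQ x) (sQ y) (disjoint_cyc h1' h2')
    simp only [hF, disjoint_union_left, disjoint_union_right]
    exact ⟨⟨d1, (hPQ.mono (tP y) (tQ x)).symm⟩, hPQ.mono (tP x) (tQ y), d2⟩
  have hav := averaging hPQ hno (range #P) F (fun a _ => by
      rw [← card_pos]
      have : #(F a ∩ P) = j := by rw [FP, cP]
      have := card_le_card (inter_subset_left : F a ∩ P ⊆ F a)
      omega) (j * σ) (by
    intro A hA hc
    obtain ⟨d, hd⟩ := Nat.exists_eq_add_of_le hjs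
    obtain ⟨S, hS, hSc, hg⟩ := circle_lemma j σ hj d A (hd ▸ hA) hc
    refine ⟨S, hS, hSc, fun x hx y hy hxy => ?_⟩
    rcases lt_or_gt_of_ne hxy with hlt | hlt
    · have := hg x hx y hy hlt
      exact hdis x y hlt this.1 (by omega)
    · have := hg y hy x hx hlt
      exact (hdis y x hlt this.1 (by omega)).symm)
  have hfam : ∀ a, H ∩ Fam P Q (F a) = {f ∈ H | #(f ∩ P) = j} := by
    intro a
    ext f
    simp only [mem_inter, Fam, mem_filter, mem_univ, true_and, FP, FQ, cP, cQ]
    constructor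
    · rintro ⟨h1, h2, _⟩; exact ⟨h1, h2⟩
    · rintro ⟨h1, h2⟩
      obtain ⟨h3, h4⟩ := hH f h1
      refine ⟨h1, h2, ?_, ?_⟩
      · have : #f = #(f ∩ P) + #(f ∩ Q) := by
          rw [← card_union_of_disjoint (hPQ.mono inter_subset_right inter_subset_right),
            ← inter_union_distrib_left, inter_eq_left.2 h4]
        omega
      · rw [sdiff_eq_empty_iff_subset.2 h4, sdiff_eq_empty_iff_subset.2]
        exact union_subset_union (tP a) (tQ a)
  simp only [hfam, FP, FQ, cP, cQ, sum_const, card_range, nsmul_eq_mul] at hav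
  have hpos : (0 : ℚ) < ((#P).choose j * (#Q).choose (r - j) : ℕ) := by
    rw [Nat.cast_pos]
    refine Nat.mul_pos (Nat.choose_pos hjP) (Nat.choose_pos (hl.trans hcap))
  rw [← mul_div_assoc, div_le_iff₀ hpos, mul_comm] at hav
  exact_mod_cast hav
end

/-! ### Cross-intersecting families and links -/

/-- Any two distinct members of `M` are disjoint. -/
def IsMat {α : Type*} (M : Finset (Finset α)) : Prop := ∀ e ∈ M, ∀ f ∈ M, e ≠ f → Disjoint e f

lemma isMat_insert {α : Type*} [DecidableEq α] {M : Finset (Finset α)} (hd : IsMat M) {e : Finset α}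
    (hne : e.Nonempty) (hdis : ∀ f ∈ M, Disjoint e f) :
    IsMat (insert e M) ∧ #(insert e M) = #M + 1 := by
  constructor
  · intro f hf g hg hfg
    rw [mem_insert] at hf hg
    rcases hf with rfl | hf <;> rcases hg with rfl | hg
    · exact absurd rfl hfg
    · exact hdis g hg
    · exact (hdis f hf).symm
    · exact hd f hf g hg hfg
  · apply card_insert_of_notMem
    intro he
    have := hdis e he
    rw [disjoint_self] at this
    exact hne.ne_empty this

section KK
open scoped FinsetFamily
open Nat

/-- Of two cross-intersecting families of `k`-subsets of an `N`-set, `2 k ≤ N`, one has at most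
`C(N - 1, k - 1)` members. The `(N - 2k)`-fold shadow of the complements of `ℬ` consists of
`k`-sets disjoint from a member of `ℬ`, hence avoids `𝒜`, and it is large by Kruskal–Katona. -/
lemma cross_fin {N k : ℕ} {𝒜 ℬ : Finset (Finset (Fin N))} (hk : 1 ≤ k) (hkN : 2 * k ≤ N)
    (hA : (𝒜 : Set (Finset (Fin N))).Sized k) (hB : (ℬ : Set (Finset (Fin N))).Sized k)
    (hx : ∀ Z ∈ 𝒜, ∀ Z' ∈ ℬ, ¬ Disjoint Z Z') :
    #𝒜 ≤ (N - 1).choose (k - 1) ∨ #ℬ ≤ (N - 1).choose (k - 1) := by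
  by_contra hcon
  push Not at hcon
  obtain ⟨sA, sB⟩ := hcon
  have hdis : Disjoint 𝒜 (∂^[N - 2 * k] ℬᶜˢ) := disjoint_right.2 fun A hAbar hA ↦ by
    simp only [mem_shadow_iterate_iff_exists_sdiff, mem_compls] at hAbar
    obtain ⟨C, hC, hAC, _⟩ := hAbar
    exact hx A hA _ hC (disjoint_of_subset_left hAC disjoint_compl_right)
  have z : (N - 1).choose (N - k) < #ℬᶜˢ := by
    rwa [card_compls, choose_symm_of_eq_add (b := k - 1) (by omega)]
  have hBbar : (ℬᶜˢ : Set (Finset (Fin N))).Sized (N - k) := by simpa using hB.compls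
  have kk := kruskal_katona_lovasz_form (i := N - 2 * k) (by omega)
    (by omega : N - k ≤ N - 1) tsub_le_self hBbar z.le
  have e1 : N - k - (N - 2 * k) = k := by omega
  rw [e1] at kk
  have h3 : #(𝒜 ∪ ∂^[N - 2 * k] ℬᶜˢ) ≤ N.choose k := by
    have : ((𝒜 ∪ ∂^[N - 2 * k] ℬᶜˢ : Finset (Finset (Fin N))) : Set (Finset (Fin N))).Sized k := by
      rw [coe_union, Set.sized_union]
      refine ⟨hA, ?_⟩
      have := hBbar.shadow_iterate (k := N - 2 * k)
      rwa [e1] at this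
    simpa using this.card_le
  rw [card_union_of_disjoint hdis] at h3
  have : N.choose k = (N - 1).choose (k - 1) + (N - 1).choose k := by
    obtain ⟨N, rfl⟩ := Nat.exists_eq_add_of_le (show 1 ≤ N by omega)
    obtain ⟨k, rfl⟩ := Nat.exists_eq_add_of_le hk
    rw [Nat.add_comm 1 N, Nat.add_comm 1 k]
    simp [Nat.choose_succ_succ]
  omega
end KK

section Link
variable {α : Type*} [DecidableEq α]

lemma cross_finset {W : Finset α} {k : ℕ} {𝒜 ℬ : Finset (Finset α)} (hk : 1 ≤ k)
    (hkN : 2 * k ≤ #W) (hA : 𝒜 ⊆ powersetCard k W) (hB : ℬ ⊆ powersetCard k W)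
    (hx : ∀ Z ∈ 𝒜, ∀ Z' ∈ ℬ, ¬ Disjoint Z Z') :
    #𝒜 ≤ (#W - 1).choose (k - 1) ∨ #ℬ ≤ (#W - 1).choose (k - 1) := by
  classical
  let φ : Finset α → Finset (Fin #W) := fun Z => {i | (W.equivFin.symm i : α) ∈ Z}
  have hback : ∀ Z ⊆ W, (φ Z).map (W.equivFin.symm.toEmbedding.trans (Function.Embedding.subtype _)) = Z := by
    intro Z hZ
    ext x
    simp only [mem_map, Function.Embedding.trans_apply, φ, mem_filter, mem_univ, true_and]
    constructor
    · rintro ⟨i, hi, rfl⟩; exact hi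
    · intro hx
      exact ⟨W.equivFin ⟨x, hZ hx⟩, by simpa using hx, by simp⟩
  have hcard : ∀ Z ⊆ W, #(φ Z) = #Z := by
    intro Z hZ
    conv_rhs => rw [← hback Z hZ, card_map]
  have hdis : ∀ Z ⊆ W, ∀ Z' ⊆ W, Disjoint (φ Z) (φ Z') → Disjoint Z Z' := by
    intro Z hZ Z' hZ' h
    rw [← hback Z hZ, ← hback Z' hZ', disjoint_map]
    exact h
  have hsub : ∀ 𝒞 ⊆ powersetCard k W, ∀ Z ∈ 𝒞, Z ⊆ W ∧ #Z = k := fun 𝒞 h Z hZ =>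
    mem_powersetCard.1 (h hZ)
  have hci : ∀ 𝒞 ⊆ powersetCard k W, #(𝒞.image φ) = #𝒞 := by
    intro 𝒞 h
    apply card_image_of_injOn
    intro Z hZ Z' hZ' he
    have h1 := hback Z (hsub 𝒞 h Z hZ).1
    have h2 := hback Z' (hsub 𝒞 h Z' hZ').1
    change φ Z = φ Z' at he
    rw [← h1, ← h2, he]
  have hsz : ∀ 𝒞 ⊆ powersetCard k W, ((𝒞.image φ : Finset _) : Set (Finset (Fin #W))).Sized k := by
    intro 𝒞 h Z hZ
    obtain ⟨Z, hZ₁, rfl⟩ := mem_image.1 (mem_coe.1 hZ)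
    rw [hcard Z (hsub 𝒞 h Z hZ₁).1, (hsub 𝒞 h Z hZ₁).2]
  rw [← hci 𝒜 hA, ← hci ℬ hB]
  apply cross_fin hk hkN (hsz 𝒜 hA) (hsz ℬ hB)
  intro Y hY Y' hY'
  obtain ⟨Z, hZ, rfl⟩ := mem_image.1 hY
  obtain ⟨Z', hZ', rfl⟩ := mem_image.1 hY'
  intro h
  exact hx Z hZ Z' hZ' (hdis _ (hsub _ hA Z hZ).1 _ (hsub _ hB Z' hZ').1 h)

lemma card_powersetCard_mem {W : Finset α} {k : ℕ} (hk : 1 ≤ k) {w : α} (hw : w ∈ W) :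
    #{Z ∈ powersetCard k W | w ∈ Z} = (#W - 1).choose (k - 1) := by
  rw [← card_erase_of_mem hw, ← card_powersetCard]
  refine card_bij' (fun Z _ => Z.erase w) (fun Z _ => insert w Z) ?_ ?_ ?_ ?_
  · intro Z hZ
    rw [mem_filter, mem_powersetCard] at hZ
    rw [mem_powersetCard, card_erase_of_mem hZ.2, hZ.1.2]
    exact ⟨erase_subset_erase _ hZ.1.1, rfl⟩
  · intro Z hZ
    rw [mem_powersetCard] at hZ
    have hwZ : w ∉ Z := fun h => notMem_erase w W (hZ.1 h)
    rw [mem_filter, mem_powersetCard, card_insert_of_notMem hwZ, hZ.2]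
    refine ⟨⟨insert_subset hw (hZ.1.trans (erase_subset _ _)), by omega⟩, mem_insert_self _ _⟩
  · intro Z hZ
    exact insert_erase (mem_filter.1 hZ).2
  · intro Z hZ
    rw [mem_powersetCard] at hZ
    exact erase_insert fun h => notMem_erase w W (hZ.1 h)

/-- A family of `k`-subsets of `W` all of which meet one fixed `k`-set is small. -/
lemma card_le_of_meet {W Z' : Finset α} {k : ℕ} {𝒜 : Finset (Finset α)} (hk : 1 ≤ k)
    (hA : 𝒜 ⊆ powersetCard k W) (hZ' : Z' ∈ powersetCard k W)
    (hx : ∀ Z ∈ 𝒜, ¬ Disjoint Z Z') : #𝒜 ≤ k * (#W - 1).choose (k - 1) := by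
  rw [mem_powersetCard] at hZ'
  have : 𝒜 ⊆ Z'.biUnion fun w => {Z ∈ powersetCard k W | w ∈ Z} := by
    intro Z hZ
    obtain ⟨w, h1, h2⟩ := not_disjoint_iff.1 (hx Z hZ)
    exact mem_biUnion.2 ⟨w, h2, mem_filter.2 ⟨hA hZ, h1⟩⟩
  refine (card_le_card this).trans (card_biUnion_le.trans ?_)
  rw [sum_congr rfl fun w hw => card_powersetCard_mem hk (hZ'.1 hw), sum_const, hZ'.2, smul_eq_mul]

/-- The link of `x` in `W`: the `k`-subsets `Z` of `W` with `{x} ∪ Z ∈ H`. It is only used for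
`x ∉ W`, so that these are edges of size `k + 1`. -/
def link (H : Finset (Finset α)) (W : Finset α) (k : ℕ) (x : α) : Finset (Finset α) :=
  {Z ∈ powersetCard k W | insert x Z ∈ H}

/-- If a maximum matching misses `W`, the links in `W` of two vertices of one of its edges `e` are
cross-intersecting: disjoint members would allow `e` to be replaced by two edges. -/
lemma link_cross {H M : Finset (Finset α)} {W : Finset α} {k σ : ℕ} (hno : ¬ HasM H (σ + 1))
    (hMH : M ⊆ H) (hM : IsMat M) (hMc : #M = σ) (hW : ∀ f ∈ M, Disjoint f W)
    {e : Finset α} (he : e ∈ M) {x y : α} (hx : x ∈ e) (hy : y ∈ e) (hxy : x ≠ y) :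
    ∀ Z ∈ link H W k x, ∀ Z' ∈ link H W k y, ¬ Disjoint Z Z' := by
  intro Z hZ Z' hZ' hd
  rw [link, mem_filter, mem_powersetCard] at hZ hZ'
  have hout : ∀ v ∈ e, ∀ f ∈ M.erase e, ∀ Y ⊆ W, Disjoint (insert v Y) f := by
    intro v hv f hf Y hY
    rw [mem_erase] at hf
    rw [disjoint_insert_left]
    exact ⟨disjoint_left.1 (hM e he f hf.2 hf.1.symm) hv, ((hW f hf.2).symm).mono_left hY⟩
  have m0 : IsMat (M.erase e) := fun f hf g hg => hM f (mem_of_mem_erase hf) g (mem_of_mem_erase hg)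
  have m1 := isMat_insert m0 (insert_nonempty y Z') (fun f hf => hout y hy f hf Z' hZ'.1.1)
  have hWe := disjoint_left.1 (hW e he)
  have hxy' : Disjoint (insert x Z) (insert y Z') := by
    rw [disjoint_insert_left, disjoint_insert_right, mem_insert]
    exact ⟨fun h => h.elim hxy fun h => hWe hx (hZ'.1.1 h), fun h => hWe hy (hZ.1.1 h), hd⟩
  have m2 := isMat_insert m1.1 (insert_nonempty x Z) (fun f hf => by
    rcases mem_insert.1 hf with rfl | hf
    · exact hxy'
    · exact hout x hx f hf Z hZ.1.1)
  refine hno ⟨_, ?_, ?_, m2.1⟩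
  · exact insert_subset hZ.2 (insert_subset hZ'.2 ((erase_subset _ _).trans hMH))
  · rw [m2.2, m1.2, card_erase_of_mem he, hMc]
    have : 0 < σ := hMc ▸ card_pos.2 ⟨e, he⟩
    omega

/-- For an edge `e` of a maximum matching missing `W`, either the links of the vertices of `e` are
jointly small, or only one vertex of `e` has a non-empty link. If two links are non-empty then each
link has at most `k C(#W - 1, k - 1)` members, and by `cross_finset` all but one of them have at most
`C(#W - 1, k - 1)`. -/
lemma block_dichotomy {H M : Finset (Finset α)} {W : Finset α} {k σ : ℕ} (hno : ¬ HasM H (σ + 1))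
    (hMH : M ⊆ H) (hM : IsMat M) (hMc : #M = σ) (hW : ∀ f ∈ M, Disjoint f W)
    (hk : 1 ≤ k) (hkW : 2 * k ≤ #W) {e : Finset α} (he : e ∈ M) (hec : #e = k + 1) :
    ∑ x ∈ e, #(link H W k x) ≤ 2 * k * (#W - 1).choose (k - 1) ∨
      ∃ x ∈ e, ∀ y ∈ e, y ≠ x → link H W k y = ∅ := by
  by_cases hs : ∃ x ∈ e, ∀ y ∈ e, y ≠ x → link H W k y = ∅
  · exact Or.inr hs
  left
  push Not at hs
  have hcr := fun x hx y hy hxy => link_cross (k := k) (x := x) (y := y) hno hMH hM hMc hW he hx hy hxy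
  have hsub : ∀ x, link H W k x ⊆ powersetCard k W := fun x => filter_subset _ _
  set c := (#W - 1).choose (k - 1)
  have hbig : ∀ x ∈ e, #(link H W k x) ≤ k * c := by
    intro x hx
    obtain ⟨y, hy, hyx, Z', hZ'⟩ := hs x hx
    exact card_le_of_meet hk (hsub x) (hsub y hZ') fun Z hZ => hcr x hx y hy hyx.symm Z hZ Z' hZ'
  obtain ⟨x, hx, hsm⟩ : ∃ x ∈ e, ∀ y ∈ e, y ≠ x → #(link H W k y) ≤ c := by
    by_cases hb : ∃ x ∈ e, c < #(link H W k x)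
    · obtain ⟨x, hx, hxc⟩ := hb
      refine ⟨x, hx, fun y hy hyx => ?_⟩
      rcases cross_finset hk hkW (hsub x) (hsub y) (hcr x hx y hy hyx.symm) with h | h
      · exact absurd h (not_le.2 hxc)
      · exact h
    · push Not at hb
      obtain ⟨x, hx⟩ := card_pos.1 (show 0 < #e by omega)
      exact ⟨x, hx, fun y hy _ => hb y hy⟩
  rw [← add_sum_erase _ _ hx]
  have : ∑ y ∈ e.erase x, #(link H W k y) ≤ k * c := by
    have h := sum_le_card_nsmul (e.erase x) (fun y => #(link H W k y)) c
      fun y hy => hsm y (mem_of_mem_erase hy) (ne_of_mem_erase hy)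
    rw [card_erase_of_mem hx, hec, smul_eq_mul] at h
    simpa using h
  have := hbig x hx
  have : 2 * k * c = k * c + k * c := by ring
  omega

/-- The link in `W` of a vertex `x` avoided by a maximum matching contains no `k`-set disjoint from that
matching. Since no edge lies inside `W`, a matching of size `σ` covers at most `k σ` vertices
of `W`. -/
lemma link_single {H M : Finset (Finset α)} {W : Finset α} {k σ : ℕ} (hno : ¬ HasM H (σ + 1))
    (hMH : M ⊆ H) (hM : IsMat M) (hMc : #M = σ) {x : α} (hxM : ∀ f ∈ M, x ∉ f)
    (hunif : ∀ f ∈ H, #f = k + 1) (hmeet : ∀ f ∈ H, ¬ f ⊆ W) :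
    #(link H W k x) + (#W - k * σ).choose k ≤ (#W).choose k := by
  set Y := W \ M.biUnion id with hY
  have hYc : #W - k * σ ≤ #Y := by
    have h1 : #(W ∩ M.biUnion id) ≤ k * σ := by
      rw [inter_biUnion, mul_comm, ← hMc, ← smul_eq_mul]
      refine card_biUnion_le.trans (sum_le_card_nsmul _ _ _ fun f hf => ?_)
      have : W ∩ id f ⊂ f := by
        refine ⟨inter_subset_right, fun h => hmeet f (hMH hf) fun a ha => (mem_inter.1 (h ha)).1⟩
      have := card_lt_card this
      rw [hunif f (hMH hf)] at this
      omega
    have := card_sdiff_add_card_inter W (M.biUnion id)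
    rw [← hY] at this
    omega
  have hd : Disjoint (link H W k x) (powersetCard k Y) := by
    rw [disjoint_left]
    intro Z hZ hZY
    rw [link, mem_filter] at hZ
    rw [mem_powersetCard] at hZY
    have m := isMat_insert hM (insert_nonempty x Z) (fun f hf => by
      rw [disjoint_insert_left]
      refine ⟨hxM f hf, ?_⟩
      rw [disjoint_left]
      intro a ha haf
      have := hZY.1 ha
      rw [hY, mem_sdiff, mem_biUnion] at this
      exact this.2 ⟨f, hf, haf⟩)
    exact hno ⟨_, insert_subset hZ.2 hMH, by rw [m.2, hMc], m.1⟩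
  have hu : #(link H W k x ∪ powersetCard k Y) ≤ #(powersetCard k W) :=
    card_le_card (union_subset (filter_subset _ _ : link H W k x ⊆ powersetCard k W)
    (powersetCard_mono (sdiff_subset : Y ⊆ W)))
  rw [card_union_of_disjoint hd, card_powersetCard, card_powersetCard] at hu
  have := Nat.choose_le_choose k hYc
  omega
end Link

/-! ### Degrees and the Ore condition -/

section Deg
variable {α : Type*} [DecidableEq α]

/-- The degree of `v` in `H`; `hdeg` over an arbitrary vertex type. -/
def vdeg (H : Finset (Finset α)) (v : α) : ℕ := #{e ∈ H | v ∈ e}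

/-- The Ore-degree condition for matchings of size `s` on the vertex set `V`. The vertex set is an
explicit finset so that vertices can be deleted without changing the ambient type; the truncated
difference of binomials is an honest one for `s ≥ 1`. -/
def Ore (V : Finset α) (H : Finset (Finset α)) (r s : ℕ) : Prop :=
  ∀ S ⊆ V, #S = r → S ∉ H →
    r * ((#V - 1).choose (r - 1) - (#V - s).choose (r - 1)) < ∑ v ∈ S, vdeg H v

/-- Two distinct vertices lie together in at most `C(#V - 2, r - 2)` edges. -/
lemma codeg_le {V : Finset α} {H : Finset (Finset α)} {r : ℕ} (hH : ∀ f ∈ H, f ⊆ V ∧ #f = r)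
    {u v : α} (hu : u ∈ V) (hv : v ∈ V) (huv : u ≠ v) :
    #{e ∈ H | v ∈ e ∧ u ∈ e} ≤ (#V - 2).choose (r - 2) := by
  have h2 : ({u, v} : Finset α) ⊆ V := by
    intro x hx; simp only [mem_insert, mem_singleton] at hx; rcases hx with rfl | rfl <;> assumption
  have hc : #(V \ {u, v}) = #V - 2 := by rw [card_sdiff_of_subset h2, card_pair huv]
  rw [← hc, ← card_powersetCard]
  apply card_le_card_of_injOn (fun e => e \ {u, v})
  · intro e he
    simp only [coe_filter, Set.mem_ofPred_eq] at he
    obtain ⟨h, h3, h4⟩ := he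
    have h5 : ({u, v} : Finset α) ⊆ e := by
      intro x hx; simp only [mem_insert, mem_singleton] at hx; rcases hx with rfl | rfl <;> assumption
    rw [mem_coe, mem_powersetCard, card_sdiff_of_subset h5, card_pair huv, (hH e h).2]
    exact ⟨sdiff_subset_sdiff (hH e h).1 subset_rfl, rfl⟩
  · intro e he f hf hef
    simp only [coe_filter, Set.mem_ofPred_eq] at he hf
    ext x
    have := Finset.ext_iff.1 hef x
    simp only [mem_sdiff, mem_insert, mem_singleton] at this
    by_cases h1 : x = u
    · subst h1; simp [he.2.2, hf.2.2]
    by_cases h2 : x = v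
    · subst h2; simp [he.2.1, hf.2.1]
    simpa [h1, h2] using this

/-- Deleting a vertex turns the Ore condition for `s + 1` into the one for `s`: every degree drops by at
most `C(#V - 2, r - 2)`, and Pascal's rule shows that the threshold drops by exactly `r` times this. -/
lemma ore_erase {V : Finset α} {H : Finset (Finset α)} {r s : ℕ} (hr : 2 ≤ r) (hs : 1 ≤ s)
    (hV : 2 ≤ #V) (hH : ∀ f ∈ H, f ⊆ V ∧ #f = r) (hO : Ore V H r (s + 1)) {v : α} (hv : v ∈ V) :
    Ore (V.erase v) {e ∈ H | v ∉ e} r s := by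
  intro S hS hSr hSH
  have hvS : v ∉ S := fun h => notMem_erase v V (hS h)
  have h1 := hO S (hS.trans (erase_subset _ _)) hSr (fun h => hSH (mem_filter.2 ⟨h, hvS⟩))
  have h2 : ∀ u ∈ S, vdeg H u ≤ vdeg {e ∈ H | v ∉ e} u + (#V - 2).choose (r - 2) := by
    intro u hu
    have := codeg_le hH (mem_of_mem_erase (hS hu)) hv (ne_of_mem_erase (hS hu))
    have h3 : vdeg H u = vdeg {e ∈ H | v ∉ e} u + #{e ∈ H | v ∈ e ∧ u ∈ e} := by
      rw [vdeg, vdeg, ← card_union_of_disjoint]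
      · congr 1; ext e; simp only [mem_filter, mem_union]; tauto
      · rw [disjoint_left]; intro e; simp only [mem_filter]; tauto
    omega
  have h3 := sum_le_sum h2
  rw [sum_add_distrib, sum_const, hSr, smul_eq_mul] at h3
  rw [card_erase_of_mem hv]
  obtain ⟨n, hn⟩ := Nat.exists_eq_add_of_le' hV
  obtain ⟨q, rfl⟩ := Nat.exists_eq_add_of_le' hr
  rw [hn] at h1 h3 ⊢
  have e1 : n + 2 - 1 = n + 1 := by omega
  have e2 : q + 2 - 1 = q + 1 := by omega
  have e3 : n + 2 - (s + 1) = n + 1 - s := by omega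
  simp only [Nat.add_sub_cancel] at h3
  rw [e1, e2, e3, Nat.choose_succ_succ] at h1
  rw [e1, e2, Nat.add_sub_cancel]
  have h4 : (n + 1 - s).choose (q + 1) ≤ n.choose (q + 1) := Nat.choose_le_choose _ (by omega)
  rw [Nat.succ_eq_add_one, Nat.add_sub_assoc h4, mul_add] at h1
  omega

/-- A `σ`-matching avoiding a vertex `v` of large degree extends through `v`: at most
`r σ C(#V - 2, r - 2)` of the edges through `v` meet it. -/
lemma extend_matching {V : Finset α} {H M : Finset (Finset α)} {r σ : ℕ}
    (hH : ∀ f ∈ H, f ⊆ V ∧ #f = r) (hMH : M ⊆ H) (hM : IsMat M) (hMc : #M = σ) {v : α}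
    (hv : v ∈ V) (hvM : ∀ f ∈ M, v ∉ f) (hd : r * σ * (#V - 2).choose (r - 2) < vdeg H v) :
    HasM H (σ + 1) := by
  by_contra hno
  have hsub : {e ∈ H | v ∈ e} ⊆ (M.biUnion id).biUnion fun u => {e ∈ H | v ∈ e ∧ u ∈ e} := by
    intro e he
    rw [mem_filter] at he
    by_contra hcon
    have hdis : ∀ f ∈ M, Disjoint e f := by
      intro f hf
      rw [disjoint_left]
      intro u hue huf
      exact hcon (mem_biUnion.2 ⟨u, mem_biUnion.2 ⟨f, hf, huf⟩, mem_filter.2 ⟨he.1, he.2, hue⟩⟩)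
    have m := isMat_insert hM ⟨v, he.2⟩ hdis
    exact hno ⟨_, insert_subset he.1 hMH, by rw [m.2, hMc], m.1⟩
  have h1 := (card_le_card hsub).trans (card_biUnion_le.trans
    (sum_le_card_nsmul _ _ ((#V - 2).choose (r - 2)) fun u hu => by
      obtain ⟨f, hf, huf⟩ := mem_biUnion.1 hu
      exact codeg_le hH ((hH f (hMH hf)).1 huf) hv fun h => hvM f hf (h ▸ huf)))
  have h2 : #(M.biUnion id) ≤ r * σ := by
    rw [mul_comm, ← hMc, ← smul_eq_mul]
    exact card_biUnion_le.trans (sum_le_card_nsmul _ _ _ fun f hf => (hH f (hMH hf)).2.le)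
  have h3 := Nat.mul_le_mul_right ((#V - 2).choose (r - 2)) h2
  rw [smul_eq_mul] at h1
  rw [vdeg] at hd
  omega

lemma sum_vdeg (H : Finset (Finset α)) (W : Finset α) :
    ∑ w ∈ W, vdeg H w = ∑ f ∈ H, #(f ∩ W) := by
  simp only [vdeg, card_filter]
  rw [sum_comm]
  refine sum_congr rfl fun f _ => ?_
  rw [← card_filter, inter_comm, filter_mem_eq_inter]

/-- Averaging the Ore condition over all `r`-subsets of a set `W` that contains no edge. -/
lemma ore_average {V W : Finset α} {H : Finset (Finset α)} {r s : ℕ} (hr : 1 ≤ r)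
    (hO : Ore V H r s) (hWV : W ⊆ V) (hW : ∀ f ∈ H, ¬ f ⊆ W) (hWr : r ≤ #W) :
    #W * ((#V - 1).choose (r - 1) - (#V - s).choose (r - 1)) < ∑ f ∈ H, #(f ∩ W) := by
  rw [← sum_vdeg]
  set D := (#V - 1).choose (r - 1) - (#V - s).choose (r - 1)
  have h1 : ∑ S ∈ powersetCard r W, (r * D) < ∑ S ∈ powersetCard r W, ∑ v ∈ S, vdeg H v := by
    apply sum_lt_sum_of_nonempty (powersetCard_nonempty.2 hWr)
    intro S hS
    rw [mem_powersetCard] at hS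
    exact hO S (hS.1.trans hWV) hS.2 fun h => hW S h hS.1
  have h2 : ∑ S ∈ powersetCard r W, ∑ v ∈ S, vdeg H v =
      ∑ v ∈ W, (#W - 1).choose (r - 1) * vdeg H v := by
    rw [sum_comm' (s' := fun v => {S ∈ powersetCard r W | v ∈ S}) (t' := W)]
    · refine sum_congr rfl fun v hv => ?_
      rw [sum_const, card_powersetCard_mem hr hv, smul_eq_mul]
    · intro S v
      rw [mem_filter]
      constructor
      · rintro ⟨h, h'⟩; exact ⟨⟨h, h'⟩, (mem_powersetCard.1 h).1 h'⟩
      · rintro ⟨h, _⟩; exact h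
  rw [h2, sum_const, card_powersetCard, smul_eq_mul, ← mul_sum (s := W)] at h1
  have h3 : (#W).choose r * r = #W * (#W - 1).choose (r - 1) := by
    obtain ⟨m, hm⟩ := Nat.exists_eq_add_of_le' (hr.trans hWr)
    obtain ⟨q, rfl⟩ := Nat.exists_eq_add_of_le' hr
    rw [hm]; simp [Nat.add_one_mul_choose_eq]
  rw [← mul_assoc, h3, mul_comm (#W), mul_assoc] at h1
  exact lt_of_mul_lt_mul_left' h1

/-- The degree sum over `Q`, with edges grouped by the size of their trace on the complement `P`. -/
lemma sum_inter_split {P Q : Finset α} (hPQ : Disjoint P Q) {H : Finset (Finset α)} {r : ℕ}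
    (hH : ∀ f ∈ H, f ⊆ P ∪ Q ∧ #f = r) :
    ∑ f ∈ H, #(f ∩ Q) = ∑ j ∈ range (r + 1), (r - j) * #{f ∈ H | #(f ∩ P) = j} := by
  have hc : ∀ f ∈ H, #(f ∩ P) + #(f ∩ Q) = r := fun f hf => by
    rw [← card_union_of_disjoint (hPQ.mono inter_subset_right inter_subset_right),
      ← inter_union_distrib_left, inter_eq_left.2 (hH f hf).1, (hH f hf).2]
  rw [← sum_fiberwise_of_maps_to (t := range (r + 1)) (g := fun f => #(f ∩ P))]
  · refine sum_congr rfl fun j _ => ?_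
    rw [mul_comm, ← smul_eq_mul, ← sum_const]
    refine sum_congr rfl fun f hf => ?_
    rw [mem_filter] at hf
    have := hc f hf.1
    omega
  · intro f hf
    have := hc f hf
    rw [mem_range]; omega

/-- The edges with exactly one vertex in `P`, counted through links. -/
lemma card_one_le {P Q : Finset α} {H : Finset (Finset α)} {k : ℕ}
    (hH : ∀ f ∈ H, f ⊆ P ∪ Q ∧ #f = k + 1) :
    #{f ∈ H | #(f ∩ P) = 1} ≤ ∑ x ∈ P, #(link H Q k x) := by
  have hsub : {f ∈ H | #(f ∩ P) = 1} ⊆ P.biUnion fun x => (link H Q k x).image (insert x) := by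
    intro f hf
    rw [mem_filter, card_eq_one] at hf
    obtain ⟨hf, x, hx⟩ := hf
    have hxf : x ∈ f ∩ P := by rw [hx]; exact mem_singleton_self x
    rw [mem_inter] at hxf
    refine mem_biUnion.2 ⟨x, hxf.2, mem_image.2 ⟨f.erase x, ?_, insert_erase hxf.1⟩⟩
    rw [link, mem_filter, mem_powersetCard, card_erase_of_mem hxf.1, (hH f hf).2,
      insert_erase hxf.1]
    refine ⟨⟨?_, rfl⟩, hf⟩
    intro y hy
    rw [mem_erase] at hy
    rcases mem_union.1 ((hH f hf).1 hy.2) with h | h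
    · have : y ∈ f ∩ P := mem_inter.2 ⟨hy.2, h⟩
      rw [hx, mem_singleton] at this
      exact absurd this hy.1
    · exact h
  exact (card_le_card hsub).trans (card_biUnion_le.trans (sum_le_sum fun x _ => card_image_le))
end Deg

/-! ### Numerical estimates

In `multi_num` and `single_num`, `r = t + 3` is the uniformity, `τ + 1` the size of the matching, `a + 2` the number of
vertices of `Q`, and `b + 3` that of all vertices. -/

section Num

/-- Factorwise comparison of `C(b, q)` with `C(a, q)`. -/
lemma pow_choose_le {l : ℝ} (hl : 0 ≤ l) {a b q : ℕ} (hqa : q ≤ a) (hqb : q ≤ b)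
    (h : ∀ i < q, l * ((b : ℝ) - i) ≤ (a : ℝ) - i) :
    l ^ q * (b.choose q : ℝ) ≤ a.choose q := by
  induction q with
  | zero => simp
  | succ q ih =>
    have ih := ih (by omega) (by omega) fun i hi => h i (by omega)
    have h1 : ((a.choose (q + 1) : ℕ) : ℝ) * (q + 1) = a.choose q * ((a : ℝ) - q) := by
      have := congrArg (Nat.cast (R := ℝ)) (Nat.choose_succ_right_eq a q)
      push_cast [Nat.cast_sub (show q ≤ a by omega)] at this
      exact this
    have h2 : ((b.choose (q + 1) : ℕ) : ℝ) * (q + 1) = b.choose q * ((b : ℝ) - q) := by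
      have := congrArg (Nat.cast (R := ℝ)) (Nat.choose_succ_right_eq b q)
      push_cast [Nat.cast_sub (show q ≤ b by omega)] at this
      exact this
    have hq : (0 : ℝ) < q + 1 := by positivity
    refine le_of_mul_le_mul_right ?_ hq
    rw [h1, mul_assoc, h2]
    have h3 := h q (by omega)
    have h4 : (0 : ℝ) ≤ (b : ℝ) - q := by
      rw [sub_nonneg]; exact_mod_cast (show q ≤ b by omega)
    calc l ^ (q + 1) * (b.choose q * ((b : ℝ) - q))
        = (l ^ q * b.choose q) * (l * ((b : ℝ) - q)) := by ring
      _ ≤ _ := mul_le_mul ih h3 (by positivity) (by positivity)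

/-- The slack left when the vertices of a matching edge have jointly small links. -/
lemma multi_num {t τ a b : ℕ} (ht : 1 ≤ t) (h1 : a + (t + 3) * (τ + 2) = b + 2)
    (h2 : (t + 3) * (t + 2) * (τ + 2) ≤ b + 2) :
    4 * (t + 2) ^ 2 * (a + 1).choose (t + 1) + (a + 2) * τ * b.choose t ≤
      2 * (a + 2) * (a + 1).choose (t + 1) := by
  have ha : (t + 3) * (t + 1) * (τ + 2) ≤ a := by nlinarith
  have hta : t ≤ a := by
    have : t * 1 ≤ (t + 3) * ((t + 1) * (τ + 2)) :=
      Nat.mul_le_mul (by omega) (Nat.mul_pos (by omega) (by omega))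
    linarith
  have htb : t ≤ b := by nlinarith
  rcases Nat.eq_zero_or_pos τ with rfl | hτ
  · have : 4 * (t + 2) ^ 2 ≤ 2 * (a + 2) := by nlinarith
    simpa using Nat.mul_le_mul_right _ this
  have hid : (t + 1) * (a + 1).choose (t + 1) = (a + 1) * a.choose t := by
    rw [Nat.add_one_mul_choose_eq, mul_comm]
  set μ : ℝ := (t + 1) / (t + 2) with hμ
  have ht0 : (0 : ℝ) < t + 2 := by positivity
  have hr1 : (a : ℝ) + (t + 3) * (τ + 2) = b + 2 := by exact_mod_cast h1
  have hr2 : (t + 3 : ℝ) * (t + 2) * (τ + 2) ≤ b + 2 := by exact_mod_cast h2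
  have hmu : μ * (t + 2) = t + 1 := by rw [hμ]; field_simp
  -- factor by factor `C(a, t) ≥ μ ^ t C(b, t)`, and Bernoulli bounds `μ ^ t` from below
  have key := pow_choose_le (l := μ) (by positivity) hta htb (by
    intro i hi
    have hi' : (i : ℝ) + 1 ≤ t := by exact_mod_cast hi
    refine le_of_mul_le_mul_right ?_ ht0
    have : μ * ((b : ℝ) - i) * (t + 2) = (t + 1) * ((b : ℝ) - i) := by rw [← hmu]; ring
    rw [this]
    nlinarith)
  have hB : 2 ≤ (t + 3 : ℝ) * μ ^ t := by
    have := one_add_mul_le_pow (a := μ - 1) (by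
      have : 0 ≤ μ := by positivity
      linarith) t
    rw [add_sub_cancel] at this
    have e : 1 + (t : ℝ) * (μ - 1) = 2 / (t + 2) := by rw [hμ]; field_simp; ring
    rw [e, div_le_iff₀ ht0] at this
    have hp : 0 ≤ μ ^ t := by positivity
    nlinarith
  have hc : 2 * (b.choose t : ℝ) ≤ (t + 3) * a.choose t := by
    calc 2 * (b.choose t : ℝ) ≤ (t + 3) * μ ^ t * b.choose t := by gcongr
      _ = (t + 3) * (μ ^ t * b.choose t) := by ring
      _ ≤ _ := by gcongr
  have hc' : 2 * b.choose t ≤ (t + 3) * a.choose t := by exact_mod_cast hc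
  have h5 : 2 * τ * (t + 1) * b.choose t ≤ (t + 1) * (a + 1).choose (t + 1) := by
    rw [hid]
    calc 2 * τ * (t + 1) * b.choose t = τ * (t + 1) * (2 * b.choose t) := by ring
      _ ≤ τ * (t + 1) * ((t + 3) * a.choose t) := by gcongr
      _ = ((t + 3) * (t + 1) * τ) * a.choose t := by ring
      _ ≤ (a + 1) * a.choose t := by gcongr; nlinarith
  have h6 : 2 * τ * b.choose t ≤ (a + 1).choose (t + 1) := by
    refine le_of_mul_le_mul_left ?_ (Nat.succ_pos t)
    linarith
  have h7 : 8 * (t + 2) ^ 2 ≤ 3 * (a + 2) := by nlinarith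
  set X := (a + 1).choose (t + 1)
  have h8 := Nat.mul_le_mul_right X h7
  have h9 := Nat.mul_le_mul_left (a + 2) h6
  nlinarith

/-- With `λ = (t² + 3t + 1) / ((t + 3)(t + 2))`, the power `λ ^ (t + 2)` is at least
`(t + 1) / (2 (t + 3)(t + 2))`. Small `t` are checked by evaluation; for `t ≥ 6`, `λ = 1 / (1 + z)`
with `(t + 2) z ≤ 3`, so `λ ^ (t + 2) ≥ exp (-3)`. -/
lemma lam_bound {t : ℕ} (ht : 2 ≤ t) {l : ℝ}
    (hl : l * ((t + 3) * (t + 2)) = (t : ℝ) ^ 2 + 3 * t + 1) :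
    (t + 1 : ℝ) ≤ 2 * l ^ (t + 2) * ((t + 3) * (t + 2)) := by
  have hl' : l = ((t : ℝ) ^ 2 + 3 * t + 1) / ((t + 3) * (t + 2)) := by
    rw [eq_div_iff (by positivity)]; exact hl
  rcases lt_or_ge t 6 with h | h
  · subst hl'
    interval_cases t <;> norm_num
  · have hT : (6 : ℝ) ≤ t := by exact_mod_cast h
    set z : ℝ := (2 * t + 5) / ((t : ℝ) ^ 2 + 3 * t + 1) with hz
    have hz0 : 0 ≤ z := by positivity
    have hlz : l * (1 + z) = 1 := by rw [hl', hz]; field_simp; ring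
    have h1 : (1 + z) ^ (t + 2) ≤ 20.1 := by
      calc (1 + z) ^ (t + 2) ≤ (Real.exp z) ^ (t + 2) := by
            gcongr; rw [add_comm]; exact Real.add_one_le_exp z
        _ = Real.exp ((t + 2) * z) := by rw [← Real.exp_nat_mul]; push_cast; rfl
        _ ≤ Real.exp (3 * 1) := by
            rw [Real.exp_le_exp, hz, ← mul_div_assoc, div_le_iff₀ (by positivity)]; nlinarith
        _ = Real.exp 1 ^ 3 := by rw [← Real.exp_nat_mul]; norm_num
        _ ≤ 2.7182818286 ^ 3 := by gcongr; exact Real.exp_one_lt_d9.le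
        _ ≤ 20.1 := by norm_num
    have h2 : l ^ (t + 2) * (1 + z) ^ (t + 2) = 1 := by rw [← mul_pow, hlz, one_pow]
    have hl0 : 0 ≤ l ^ (t + 2) := by rw [hl']; positivity
    have h3 : 1 ≤ l ^ (t + 2) * 20.1 := by nlinarith
    nlinarith

/-- The slack left when one vertex of a matching edge carries all of its links; `c + 2` is the number
of vertices of `Q` not covered by a matching of size `τ + 1` in the worst case. -/
lemma single_num {t τ a b c : ℕ} (ht : 1 ≤ t) (h1 : a + (t + 3) * (τ + 2) = b + 2)
    (h2 : (t + 3) * (t + 2) * (τ + 2) ≤ b + 2) (h3 : c + (t + 2) * (τ + 1) = a) :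
    (a + 2) * τ * b.choose t ≤ 2 * (t + 2) * (c + 2).choose (t + 2) := by
  have hid : (t + 1) * ((t + 2) * (c + 2).choose (t + 2)) = (c + 2) * ((c + 1) * c.choose t) := by
    rw [Nat.add_one_mul_choose_eq, mul_comm (t + 2), ← Nat.add_one_mul_choose_eq]; ring
  suffices h : (t + 1) * (a + 2) * τ * b.choose t ≤ 2 * (c + 2) * (c + 1) * c.choose t by
    refine le_of_mul_le_mul_left ?_ (Nat.succ_pos t)
    nlinarith
  rcases Nat.eq_or_lt_of_le ht with rfl | ht
  · obtain ⟨e, he⟩ := Nat.exists_eq_add_of_le h2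
    have hb : b = 12 * τ + e + 22 := by omega
    have ha : a = 8 * τ + e + 16 := by omega
    have hc : c = 5 * τ + e + 13 := by omega
    subst hb ha hc
    simp only [Nat.choose_one_right]
    nlinarith [Nat.zero_le (τ ^ 3), Nat.zero_le (τ ^ 2 * e), Nat.zero_le (τ * e ^ 2),
      Nat.zero_le (τ * e), Nat.zero_le (τ ^ 2), Nat.zero_le (e ^ 2), Nat.zero_le (e ^ 3)]
  have hr1 : (a : ℝ) + (t + 3) * (τ + 2) = b + 2 := by exact_mod_cast h1
  have hr2 : (t + 3 : ℝ) * (t + 2) * (τ + 2) ≤ b + 2 := by exact_mod_cast h2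
  have hr3 : (c : ℝ) + (t + 2) * (τ + 1) = a := by exact_mod_cast h3
  have hP : (0 : ℝ) < (t + 3) * (t + 2) := by positivity
  set l : ℝ := ((t : ℝ) ^ 2 + 3 * t + 1) / ((t + 3) * (t + 2)) with hl
  have hl1 : l * ((t + 3) * (t + 2)) = (t : ℝ) ^ 2 + 3 * t + 1 := by rw [hl]; field_simp
  have hl0 : 0 ≤ l := by positivity
  -- `λ` is chosen so that `c ≥ λ (b + 2) + t + 2` follows from the lower bound on `b`
  have hlc : l * (b + 2) + t + 2 ≤ c := by
    have hle : (2 * t + 5 : ℝ) * (τ + 2) ≤ (1 - l) * (b + 2) := by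
      have e : (1 - l) * ((t + 3) * (t + 2)) = 2 * t + 5 := by
        rw [sub_mul, hl1]; ring
      have : 0 ≤ 1 - l := by
        by_contra hh
        push Not at hh
        nlinarith
      calc (2 * t + 5 : ℝ) * (τ + 2) = (1 - l) * ((t + 3) * (t + 2) * (τ + 2)) := by
            rw [← e]; ring
        _ ≤ _ := by gcongr
    nlinarith
  have hct : t ≤ c := by
    have : (0 : ℝ) ≤ l * (b + 2) := by positivity
    have : (t : ℝ) ≤ c := by linarith
    exact_mod_cast this
  have hbt : t ≤ b := by nlinarith
  have key := pow_choose_le hl0 hct hbt (by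
    intro i hi
    have hi' : (i : ℝ) + 1 ≤ t := by exact_mod_cast hi
    nlinarith)
  have hb := lam_bound ht hl1
  have hX : (0 : ℝ) ≤ b.choose t := by positivity
  have h9 : (t + 1 : ℝ) * (a + 2) * τ * b.choose t ≤ 2 * (c + 2) * (c + 1) * c.choose t := by
    calc (t + 1 : ℝ) * (a + 2) * τ * b.choose t
        ≤ (2 * l ^ (t + 2) * ((t + 3) * (t + 2))) * (b + 2) * (τ + 2) * b.choose t := by
          gcongr
          · nlinarith
          · linarith
      _ = 2 * l ^ (t + 2) * (b + 2) * ((t + 3) * (t + 2) * (τ + 2)) * b.choose t := by ring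
      _ ≤ 2 * l ^ (t + 2) * (b + 2) * (b + 2) * b.choose t := by gcongr
      _ = 2 * (l * (b + 2)) * (l * (b + 2)) * (l ^ t * b.choose t) := by ring
      _ ≤ 2 * (c + 2) * (c + 1) * c.choose t := by
          gcongr <;> linarith
  exact_mod_cast h9

/-- A lower bound for `C(ν, t + 1) - C(ν - σ, t + 1)`: this is a sum of `σ` binomials
`C(ν - 1 - i, t)`, and each step down loses at most `g`. -/
lemma deficit {ν t g : ℕ} (hg : ∀ a, a + 1 < ν → (a + 1).choose t ≤ a.choose t + g) (σ : ℕ)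
    (hσ : σ < ν) : 2 * σ * (ν - 1).choose t + 2 * (ν - σ).choose (t + 1) ≤
      2 * ν.choose (t + 1) + σ * (σ - 1) * g := by
  have h1 : ∀ i, i + 1 ≤ ν → (ν - 1).choose t ≤ (ν - 1 - i).choose t + i * g := by
    intro i
    induction i with
    | zero => simp
    | succ i ih =>
      intro hi
      have := hg (ν - 1 - (i + 1)) (by omega)
      rw [show ν - 1 - (i + 1) + 1 = ν - 1 - i by omega] at this
      have := ih (by omega)
      rw [add_mul]; omega
  induction σ with
  | zero => simp
  | succ σ ih =>
    have ih := ih (by omega)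
    have h2 := h1 σ (by omega)
    have h3 : (ν - σ).choose (t + 1) = (ν - 1 - σ).choose t + (ν - (σ + 1)).choose (t + 1) := by
      rw [show ν - σ = ν - (σ + 1) + 1 by omega, Nat.choose_succ_succ,
        show ν - (σ + 1) = ν - 1 - σ by omega]
    have h4 : σ * (σ - 1) * g + 2 * (σ * g) = (σ + 1) * σ * g := by
      cases σ <;> simp; ring
    rw [Nat.add_sub_cancel]
    nlinarith
end Num

/-! ### Uniformity different from three -/

section General

/-- The numerical input for uniformity `r = k + 1 ≠ 3`, where `N = #Q`, `n = #V` and `σ = τ + 1`. The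
first two conjuncts treat the two cases of `block_dichotomy`; the slack `N τ g` pays for the loss
in `deficit`, where `g` bounds the increments of `C(·, k - 1)` below `n - 1`. For `k ≥ 3` the choice
is `g = C(n - 3, k - 2)`, for `k = 1` it is `g = 0`. -/
lemma trace_one_num {k τ n N : ℕ} (hk : k = 1 ∨ 3 ≤ k) (h1 : N + (k + 1) * (τ + 2) = n + 1)
    (h2 : (k + 1) * k * (τ + 2) + 1 ≤ n) : ∃ g : ℕ,
    (2 * k * (2 * k * (N - 1).choose (k - 1)) + N * τ * g ≤ 2 * N * (N - 1).choose (k - 1)) ∧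
    (∀ E, E + (N - k * (τ + 1)).choose k ≤ N.choose k →
      2 * k * E + N * τ * g ≤ 2 * N * (N - 1).choose (k - 1)) ∧
    ∀ a, a + 1 < n - 1 → (a + 1).choose (k - 1) ≤ a.choose (k - 1) + g := by
  rcases hk with rfl | hk
  · refine ⟨0, ?_, ?_, ?_⟩
    · simp; omega
    · intro E hE; simp only [Nat.choose_one_right] at hE; simp; omega
    · simp
  · obtain ⟨t, rfl⟩ := Nat.exists_eq_add_of_le' (show 2 ≤ k by omega)
    have ht : 1 ≤ t := by omega
    have hN : (t + 3) * (t + 1) * (τ + 2) + 2 ≤ N := by nlinarith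
    have hNt : (t + 2) * (τ + 1) + 2 ≤ N := by nlinarith
    obtain ⟨c, hc⟩ := Nat.exists_eq_add_of_le' hNt
    obtain ⟨a, rfl⟩ := Nat.exists_eq_add_of_le' (show 2 ≤ N by omega)
    have hb : 3 ≤ n := by nlinarith
    obtain ⟨b, rfl⟩ := Nat.exists_eq_add_of_le' hb
    have e1 : a + (t + 3) * (τ + 2) = b + 2 := by linarith
    have e2 : (t + 3) * (t + 2) * (τ + 2) ≤ b + 2 := by linarith
    simp only [show a + 2 - 1 = a + 1 by omega, show t + 2 - 1 = t + 1 by omega]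
    refine ⟨b.choose t, ?_, ?_, ?_⟩
    · have := multi_num ht e1 e2
      linarith
    · intro E hE
      have := single_num ht e1 e2 (show c + (t + 2) * (τ + 1) = a by omega)
      rw [show a + 2 - (t + 2) * (τ + 1) = c + 2 by omega] at hE
      have h5 := Nat.mul_le_mul_left (2 * (t + 2)) hE
      have h6 : (t + 2) * (a + 2).choose (t + 2) = (a + 2) * (a + 1).choose (t + 1) := by
        rw [Nat.add_one_mul_choose_eq, mul_comm]
      nlinarith
    · intro x hx
      rw [Nat.choose_succ_succ, add_comm]
      gcongr
      omega

variable {α : Type*} [DecidableEq α]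

/-- A maximum matching is maximal: no edge is disjoint from it. -/
lemma extend_disjoint {H M : Finset (Finset α)} {σ : ℕ} (hno : ¬ HasM H (σ + 1)) (hMH : M ⊆ H)
    (hM : IsMat M) (hMc : #M = σ) {f : Finset α} (hf : f ∈ H) (hne : f.Nonempty)
    (hdis : ∀ e ∈ M, Disjoint f e) : False := by
  have m := isMat_insert hM hne hdis
  exact hno ⟨_, insert_subset hf hMH, by rw [m.2, hMc], m.1⟩

/-- The links in `Q` of vertices outside a maximum matching that misses `Q` are empty. -/
lemma link_empty {H M : Finset (Finset α)} {Q : Finset α} {k σ : ℕ} (hno : ¬ HasM H (σ + 1))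
    (hMH : M ⊆ H) (hM : IsMat M) (hMc : #M = σ) (hQ : ∀ f ∈ M, Disjoint f Q) {x : α}
    (hx : ∀ f ∈ M, x ∉ f) : link H Q k x = ∅ := by
  rw [eq_empty_iff_forall_notMem]
  intro Z hZ
  rw [link, mem_filter, mem_powersetCard] at hZ
  refine extend_disjoint hno hMH hM hMc hZ.2 (insert_nonempty _ _) fun e he => ?_
  rw [disjoint_insert_left]
  exact ⟨hx e he, ((hQ e he).mono_right hZ.1.1).symm⟩

/-- Vandermonde's identity in the form in which it sums the bounds over all trace sizes. -/
lemma vandermonde_pred {m N k : ℕ} (hk : 1 ≤ k) (hm : 1 ≤ m) (hN : 1 ≤ N) :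
    ∑ i ∈ range k, (m - 1).choose i * (N - 1).choose (k - 1 - i) = (m + N - 2).choose (k - 1) := by
  obtain ⟨k, rfl⟩ := Nat.exists_eq_add_of_le' hk
  rw [show m + N - 2 = (m - 1) + (N - 1) by omega, Nat.add_choose_eq,
    Finset.Nat.sum_antidiagonal_eq_sum_range_succ_mk]
  rfl

/-- The upper bounds for the degree sum over `Q` contradict the Ore lower bound. Here `E` counts the
edges with trace of size one, `R` is the contribution of larger traces, `X + c = C(n - 2, k - 1)`, and
`C1`, `C2` are the two binomials of the Ore condition. -/
lemma degree_sum_contra {k τ N g E c R X C1 C2 : ℕ}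
    (h1 : 2 * k * E + (τ + 1) * (N * τ * g) ≤ (τ + 1) * (2 * N * c))
    (h2 : R ≤ (τ + 1) * N * X)
    (h3 : 2 * (τ + 1) * (X + c) + 2 * C2 ≤ 2 * C1 + (τ + 1) * τ * g)
    (h4 : N * (C1 - C2) < R + k * E) : False := by
  have h5 : C1 ≤ C2 + (C1 - C2) := by omega
  have h6 := Nat.mul_le_mul_left N h3
  have h7 := Nat.mul_le_mul_left N h5
  nlinarith

/-- The inductive step of `ore_matching` for uniformity `k + 1 ≠ 3`, given that every vertex is avoided
by a matching one smaller. `P` contains the vertices of one such matching and has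
`(k + 1)(τ + 2) - 1` points, so `Q = V \ P` contains no edge. The degree sum over `Q` is bounded below
by `ore_average` and above by trace size: `type_bound` for traces of size at least two,
`block_dichotomy` and `link_single` for traces of size one. -/
lemma ore_step_of_ne_three [Fintype α] {V : Finset α} {H : Finset (Finset α)} {k τ : ℕ} (hk : k = 1 ∨ 3 ≤ k)
    (hV : (k + 1) * k * (τ + 2) + 1 ≤ #V) (hH : ∀ f ∈ H, f ⊆ V ∧ #f = k + 1)
    (hO : Ore V H (k + 1) (τ + 2))
    (hcrit : ∀ v ∈ V, ∃ M ⊆ H, IsMat M ∧ #M = τ + 1 ∧ ∀ f ∈ M, v ∉ f) : HasM H (τ + 2) := by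
  by_contra hno
  have hk1 : 1 ≤ k := by omega
  obtain ⟨v0, hv0⟩ : V.Nonempty := card_pos.1 (by omega)
  obtain ⟨M, hMH, hM, hMc, -⟩ := hcrit v0 hv0
  set U := M.biUnion id with hU
  have hUc : #U ≤ (k + 1) * (τ + 2) - 1 := by
    have : #U ≤ #M * (k + 1) := by
      rw [← smul_eq_mul]
      exact card_biUnion_le.trans (sum_le_card_nsmul _ _ _ fun f hf => (hH f (hMH hf)).2.le)
    rw [hMc] at this
    have e : (k + 1) * (τ + 2) = (τ + 1) * (k + 1) + (k + 1) := by ring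
    omega
  have hUV : U ⊆ V := biUnion_subset.2 fun f hf => (hH f (hMH hf)).1
  have hmV : (k + 1) * (τ + 2) ≤ #V := by nlinarith
  -- `P` is padded to have at least `k (τ + 2)` points, which leaves room for `τ + 2` disjoint
  -- intervals of length up to `k` in the circle argument
  obtain ⟨P, hUP, hPV, hPc⟩ := exists_subsuperset_card_eq hUV hUc (by omega)
  set Q := V \ P with hQ
  have hPQ : Disjoint P Q := disjoint_sdiff
  have hV' : P ∪ Q = V := union_sdiff_of_subset hPV
  have hm1 : 1 ≤ (k + 1) * (τ + 2) := Nat.mul_pos (by omega) (by omega)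
  have hm2 : 2 * (τ + 2) ≤ (k + 1) * (τ + 2) := Nat.mul_le_mul_right _ (by omega)
  have hQc : #Q + (k + 1) * (τ + 2) = #V + 1 := by
    rw [hQ, card_sdiff_of_subset hPV, hPc]; omega
  have hMQ : ∀ f ∈ M, Disjoint f Q := fun f hf =>
    hPQ.mono_left ((subset_biUnion_of_mem id hf).trans hUP)
  have hmeet : ∀ f ∈ H, ¬ f ⊆ Q := fun f hf hfQ =>
    extend_disjoint hno hMH hM hMc hf (card_pos.1 (by rw [(hH f hf).2]; omega))
      fun e he => ((hMQ e he).mono_right hfQ).symm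
  obtain ⟨g, n1, n2, n3⟩ := trace_one_num hk hQc hV
  set N := #Q with hN
  set c1 := (N - 1).choose (k - 1) with hc1
  have hQbig : (k + 1) * (k - 1) * (τ + 2) + 2 ≤ N := by
    obtain ⟨k, rfl⟩ := Nat.exists_eq_add_of_le' hk1
    rw [Nat.add_sub_cancel]
    nlinarith
  have h2k : 2 * k ≤ N := by
    obtain ⟨k, rfl⟩ := Nat.exists_eq_add_of_le' hk1
    rw [Nat.add_sub_cancel] at hQbig
    have := Nat.mul_le_mul_left k (show 2 ≤ (k + 1 + 1) * (τ + 2) by nlinarith)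
    linarith
  have hblock : ∀ e ∈ M, 2 * k * (∑ x ∈ e, #(link H Q k x)) + N * τ * g ≤ 2 * N * c1 := by
    intro e he
    rcases block_dichotomy hno hMH hM hMc hMQ hk1 h2k he (hH e (hMH he)).2 with h | ⟨x, hx, h⟩
    · exact (Nat.add_le_add_right (Nat.mul_le_mul_left _ h) _).trans n1
    · have hsum : ∑ y ∈ e, #(link H Q k y) = #(link H Q k x) :=
        sum_eq_single x (fun y hy hyx => by rw [h y hy hyx, card_empty]) fun h => absurd hx h
      rw [hsum]
      obtain ⟨M', hM'H, hM', hM'c, hxM'⟩ := hcrit x ((hH e (hMH he)).1 hx)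
      exact n2 _ (link_single hno hM'H hM' hM'c hxM' (fun f hf => (hH f hf).2) hmeet)
  have hE1 : #{f ∈ H | #(f ∩ P) = 1} ≤ ∑ e ∈ M, ∑ x ∈ e, #(link H Q k x) := by
    refine (card_one_le (Q := Q) fun f hf => ⟨hV' ▸ (hH f hf).1, (hH f hf).2⟩).trans ?_
    rw [← sum_subset hUP]
    · rw [hU, sum_biUnion (t := id) fun e he f hf hef => hM e he f hf hef]; rfl
    · intro x _ hxU
      rw [link_empty hno hMH hM hMc hMQ, card_empty]
      exact fun f hf hxf => hxU (mem_biUnion.2 ⟨f, hf, hxf⟩)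
  have hE1' : 2 * k * #{f ∈ H | #(f ∩ P) = 1} + (τ + 1) * (N * τ * g) ≤ (τ + 1) * (2 * N * c1) := by
    have := sum_le_sum hblock
    rw [sum_add_distrib, ← mul_sum, sum_const, sum_const, hMc, smul_eq_mul, smul_eq_mul] at this
    exact (Nat.add_le_add_right (Nat.mul_le_mul_left _ hE1) _).trans this
  set m := #P with hm
  have hmN : m + N = #V := by omega
  -- the identities `e1`, `e2` turn the density bound into a single term of `vandermonde_pred`
  have hEj : ∀ i, 1 ≤ i → i < k → (k - i) * #{f ∈ H | #(f ∩ P) = i + 1} ≤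
      (τ + 1) * N * ((m - 1).choose i * (N - 1).choose (k - 1 - i)) := by
    intro i hi hik
    have hb := type_bound (j := i + 1) (h := k - 1) (r := k + 1) hPQ hno
      (fun f hf => ⟨(hH f hf).2, hV' ▸ (hH f hf).1⟩) (by omega) (by omega)
      (by
        have : (i + 1) * (τ + 2) ≤ k * (τ + 2) := Nat.mul_le_mul_right _ hik
        have e : (k + 1) * (τ + 2) = k * (τ + 2) + (τ + 2) := by ring
        show (i + 1) * (τ + 2) ≤ m
        omega)
      (by
        have : 2 * (k - 1) ≤ (i + 1) * (k - 1) := Nat.mul_le_mul_right _ (by omega)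
        omega)
      (by
        have : m ≤ (k + 1) * (τ + 2) := by omega
        have := Nat.mul_le_mul_right (k - 1) this
        have e : (k + 1) * (τ + 2) * (k - 1) = (k + 1) * (k - 1) * (τ + 2) := by ring
        show m * (k - 1) ≤ N
        omega)
    have hmpos : 0 < m := by nlinarith
    have e1 : (i + 1) * m.choose (i + 1) = m * (m - 1).choose i := by
      obtain ⟨m', hm'⟩ := Nat.exists_eq_add_of_le' hmpos
      rw [hm', Nat.add_sub_cancel, Nat.add_one_mul_choose_eq, mul_comm]
    have e2 : (k - i) * N.choose (k - i) = N * (N - 1).choose (k - 1 - i) := by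
      obtain ⟨N', hN'⟩ := Nat.exists_eq_add_of_le' (show 1 ≤ N by omega)
      obtain ⟨q, hq⟩ := Nat.exists_eq_add_of_le' (show 1 ≤ k - i by omega)
      rw [hN', Nat.add_sub_cancel, show k - 1 - i = q by omega, hq, Nat.add_one_mul_choose_eq,
        mul_comm]
    rw [show k + 1 - (i + 1) = k - i by omega] at hb
    refine Nat.le_of_mul_le_mul_right ?_ hmpos
    calc (k - i) * #{f ∈ H | #(f ∩ P) = i + 1} * m
        = (k - i) * (#{f ∈ H | #(f ∩ P) = i + 1} * m) := by ring
      _ ≤ (k - i) * ((i + 1) * (τ + 1) * (m.choose (i + 1) * N.choose (k - i))) :=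
          Nat.mul_le_mul_left _ hb
      _ = (τ + 1) * ((i + 1) * m.choose (i + 1)) * ((k - i) * N.choose (k - i)) := by ring
      _ = _ := by rw [e1, e2]; ring
  have hsplit := sum_inter_split hPQ (H := H) (r := k + 1)
    fun f hf => ⟨hV' ▸ (hH f hf).1, (hH f hf).2⟩
  have hE0 : #{f ∈ H | #(f ∩ P) = 0} = 0 := by
    rw [card_eq_zero, filter_eq_empty_iff]
    intro f hf h0
    rw [card_eq_zero, ← disjoint_iff_inter_eq_empty] at h0
    exact hmeet f hf fun x hx => (mem_union.1 (hV' ▸ (hH f hf).1 hx)).resolve_left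
      fun h => disjoint_left.1 h0 hx h
  rw [sum_range_succ, sum_range_succ', hE0, Nat.sub_self, zero_mul, mul_zero, add_zero,
    add_zero] at hsplit
  have hvan := vandermonde_pred (m := m) (N := N) hk1 (by omega) (by omega)
  have hav := ore_average (W := Q) (by omega) hO sdiff_subset hmeet (by rw [← hN]; omega)
  have hdef := deficit n3 (τ + 1) (by omega)
  rw [hsplit, Nat.add_sub_cancel] at hav
  rw [hmN] at hvan
  clear_value c1 m N
  obtain ⟨k, rfl⟩ := Nat.exists_eq_add_of_le' hk1
  rw [sum_range_succ'] at hvan hav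
  have hrest : ∑ i ∈ range k, (k + 1 + 1 - (i + 1 + 1)) * #{f ∈ H | #(f ∩ P) = i + 1 + 1} ≤
      (τ + 1) * N *
        ∑ i ∈ range k, (m - 1).choose (i + 1) * (N - 1).choose (k + 1 - 1 - (i + 1)) := by
    rw [mul_sum]
    refine sum_le_sum fun i hi => ?_
    rw [mem_range] at hi
    rw [show k + 1 + 1 - (i + 1 + 1) = k + 1 - (i + 1) by omega]
    exact hEj (i + 1) (by omega) (by omega)
  rw [show k + 1 + 1 - (0 + 1) = k + 1 by omega, zero_add, show #V - (τ + 2) = #V - 1 - (τ + 1) by omega] at hav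
  rw [Nat.choose_zero_right, one_mul, Nat.sub_zero, ← hc1] at hvan
  rw [Nat.add_sub_cancel] at hvan
  rw [show #V - 1 - 1 = #V - 2 by omega, Nat.add_sub_cancel, ← hvan, Nat.add_sub_cancel] at hdef
  rw [← hN] at hav
  exact degree_sum_contra hE1' hrest hdef hav
end General

/-! ### Uniformity three -/

section ThreeArith

variable {α : Type*} [DecidableEq α]

lemma two_mul_choose_two (a : ℕ) : 2 * ((a + 1).choose 2 : ℤ) = (a + 1) * a := by
  have := Nat.add_one_mul_choose_eq a 1
  simp only [Nat.choose_one_right] at this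
  zify at this
  linarith

/-- The final contradiction for triples. For each edge `i` of the matching, `a i` is the total size of
the links of its vertices and `l i` that of the selected vertex; `ET` counts the triples with two
points in `R` and one in `W`, and `hT` is the conclusion of `templates` with denominators cleared. -/
lemma triple_arith {τ N n : ℕ} {S E2 ET : ℕ} {E1 : ℕ}
    {ι : Type*} (M : Finset ι) (hM : #M = τ + 1) (a l : ι → ℕ)
    (hN : N + 3 * (τ + 1) = n) (hn : 6 * (τ + 2) + 1 ≤ n)
    (hE1 : E1 ≤ ∑ i ∈ M, a i) (hl : ∀ i ∈ M, l i ≤ N.choose 2)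
    (ha : ∀ i ∈ M, a i ≤ 4 * (N - 1) ∨ a i = l i)
    (hT : ET * (N - 1) + 2 * (2 * τ + 1) * ∑ i ∈ M, l i ≤ (τ + 1) * (2 * τ + 1) * (N * (N - 1)))
    (hE2 : E2 ≤ ET + ((3 * (τ + 1)).choose 2 - (2 * (τ + 1)).choose 2) * N)
    (hS : S = 2 * E1 + E2)
    (hlt : N * ((n - 1).choose 2 - (n - (τ + 2)).choose 2) < S) : False := by
  obtain ⟨p, rfl⟩ := Nat.exists_eq_add_of_le' (show 1 ≤ N by omega)
  rw [Nat.add_sub_cancel] at *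
  have hp : 3 * τ + 9 ≤ p := by omega
  have hper : ∀ i ∈ M, (p : ℤ) * 2 * a i + (2 * τ + 1) * ((p + 1) * p) ≤
      (p + 1) * p * p + 2 * (2 * τ + 1) * l i := by
    intro i hi
    have h1 := hl i hi
    zify at h1 hp
    have h2 := two_mul_choose_two p
    rcases ha i hi with h | h
    · zify at h
      nlinarith
    · rw [h]
      have : 0 ≤ ((p : ℤ) - (2 * τ + 1)) := by linarith
      nlinarith
  have hsum := sum_le_sum hper
  rw [sum_add_distrib, sum_add_distrib, sum_const, sum_const, hM, ← mul_sum, ← mul_sum] at hsum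
  have e1 : n - 1 = p + 3 * τ + 2 + 1 := by omega
  have e2 : n - (τ + 2) = p + 2 * τ + 1 + 1 := by omega
  have hc1 : (2 * (τ + 1)).choose 2 ≤ (3 * (τ + 1)).choose 2 := Nat.choose_le_choose _ (by omega)
  have hc2 : (n - (τ + 2)).choose 2 ≤ (n - 1).choose 2 := Nat.choose_le_choose _ (by omega)
  have t1 := two_mul_choose_two (3 * τ + 2)
  have t2 := two_mul_choose_two (2 * τ + 1)
  have t3 := two_mul_choose_two (p + 3 * τ + 2)
  have t4 := two_mul_choose_two (p + 2 * τ + 1)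
  rw [e1, e2] at hlt hc2
  rw [show 3 * (τ + 1) = 3 * τ + 2 + 1 by ring, show 2 * (τ + 1) = 2 * τ + 1 + 1 by ring] at hE2 hc1
  zify [hc1, hc2] at hT hE2 hS hlt hE1
  push_cast at *
  simp only [nsmul_eq_mul] at hsum
  push_cast at hsum
  set A : ℤ := ∑ i ∈ M, (a i : ℤ)
  set Lh : ℤ := ∑ i ∈ M, (l i : ℤ)
  set C1 : ℤ := (((3 * τ + 2 + 1).choose 2 : ℕ) : ℤ)
  set C2 : ℤ := (((2 * τ + 1 + 1).choose 2 : ℕ) : ℤ)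
  set C3 : ℤ := (((p + 3 * τ + 2 + 1).choose 2 : ℕ) : ℤ)
  set C4 : ℤ := (((p + 2 * τ + 1 + 1).choose 2 : ℕ) : ℤ)
  have hp0 : (0 : ℤ) < p := by zify at hp; linarith
  have hT2 : 2 * (C1 - C2) = (τ + 1) * (5 * τ + 4) := by linarith
  have hD : 2 * (C3 - C4) = 2 * (τ + 1) * p + (τ + 1) * (5 * τ + 4) := by linarith
  have hD' : C3 - C4 = (τ + 1) * p + (C1 - C2) := by linarith
  have h5 : (p : ℤ) * S ≤ p * (2 * A) + (p * ET + p * ((C1 - C2) * (p + 1))) := by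
    rw [hS]
    have := mul_le_mul_of_nonneg_left hE1 hp0.le
    have := mul_le_mul_of_nonneg_left hE2 hp0.le
    linarith
  have h6 := mul_lt_mul_of_pos_left hlt hp0
  rw [hD'] at h6
  linarith

end ThreeArith

section Templates

variable {α : Type*} [DecidableEq α]

/-- A trade-off between links and triples with two points in `R`. The templates are `2 σ` pairwise
disjoint triples: for each `e ∈ M` the point `x e` with a pair of points in `W`, and `σ` triples that
each consist of a pair in `R` and a point in `W`. Of these at most `σ` lie in `H` after any
permutation of `R` and `W`. -/
lemma templates [Fintype α] {R W : Finset α} {H M : Finset (Finset α)} {σ : ℕ}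
    (hno : ¬ HasM H (σ + 1)) (hRW : Disjoint R W) (hσ : 1 ≤ σ) (hR : #R = 2 * σ)
    (hW : 3 * σ ≤ #W) (x : Finset α → α) (hMc : #M = σ) (hinj : Set.InjOn x M)
    (hx : ∀ e ∈ M, x e ∉ R ∧ x e ∉ W) :
    (∑ e ∈ M, (#(link H W 2 (x e)) : ℚ) / ((#W).choose 2 : ℕ)) +
      σ * ((#{f ∈ H | f ⊆ R ∪ W ∧ #(f ∩ R) = 2 ∧ #(f ∩ W) = 1} : ℚ) /
        ((2 * σ).choose 2 * #W : ℕ)) ≤ σ := by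
  obtain ⟨y, hy⟩ := card_pos.1 (show 0 < #R by omega)
  have : Nonempty α := ⟨y⟩
  obtain ⟨ρ, iρ, rρ⟩ := exists_enum R
  obtain ⟨w, iw, rw'⟩ := exists_enum W
  obtain ⟨m, im, rm⟩ := exists_enum M
  rw [hMc] at im rm
  have mM : ∀ i < σ, m i ∈ M := fun i hi => by
    rw [← rm]; exact mem_image_of_mem _ (mem_range.2 hi)
  set I : ℕ → Finset ℕ := fun i => if i < σ then ∅ else {2 * (i - σ), 2 * (i - σ) + 1} with hI
  set J : ℕ → Finset ℕ := fun i => if i < σ then {2 * i, 2 * i + 1} else {σ + i} with hJ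
  set X : ℕ → Finset α := fun i => if i < σ then {x (m i)} else ∅ with hX
  set F : ℕ → Finset α := fun i => X i ∪ ((I i).image ρ ∪ (J i).image w) with hF
  have hIr : ∀ i < 2 * σ, I i ⊆ range #R := by
    intro i hi t ht
    by_cases h : i < σ <;> simp [hI, h] at ht
    rw [mem_range]; omega
  have hJr : ∀ i < 2 * σ, J i ⊆ range #W := by
    intro i hi t ht
    by_cases h : i < σ <;> simp [hJ, h] at ht <;> (rw [mem_range]; omega)
  have hId : ∀ i j, i ≠ j → Disjoint (I i) (I j) := by
    intro i j hij
    rw [disjoint_left]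
    intro t ht ht'
    by_cases h : i < σ <;> by_cases h' : j < σ <;> simp [hI, h, h'] at ht ht'
    omega
  have hJd : ∀ i j, i ≠ j → Disjoint (J i) (J j) := by
    intro i j hij
    rw [disjoint_left]
    intro t ht ht'
    by_cases h : i < σ <;> by_cases h' : j < σ <;> simp [hJ, h, h'] at ht ht' <;> omega
  have hXd : ∀ i j, i ≠ j → Disjoint (X i) (X j) := by
    intro i j hij
    rw [disjoint_left]
    intro t ht ht'
    by_cases h : i < σ <;> by_cases h' : j < σ <;> simp [hX, h, h'] at ht ht'
    have := hinj (mM i h) (mM j h') (ht.symm.trans ht')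
    exact hij (im (mem_coe.2 (mem_range.2 h)) (mem_coe.2 (mem_range.2 h')) this)
  have hXR : ∀ i, Disjoint (X i) (R ∪ W) := by
    intro i
    by_cases h : i < σ <;> simp [hX, h]
    exact hx _ (mM i h)
  have hIR : ∀ i < 2 * σ, (I i).image ρ ⊆ R := fun i hi => by
    exact (image_subset_image (hIr i hi)).trans rρ.subset
  have hJW : ∀ i < 2 * σ, (J i).image w ⊆ W := fun i hi => by
    exact (image_subset_image (hJr i hi)).trans rw'.subset
  have hFR : ∀ i < 2 * σ, F i ∩ R = (I i).image ρ := by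
    intro i hi
    ext z
    have h1 := mem_of_subset (hIR i hi) (a := z)
    have h2 := mem_of_subset (hJW i hi) (a := z)
    have h3 : z ∈ R → z ∉ W := fun h => disjoint_left.1 hRW h
    have h4 : z ∈ X i → z ∉ R ∪ W := fun h => disjoint_left.1 (hXR i) h
    rw [mem_union] at h4
    rw [mem_inter, hF, mem_union, mem_union]
    tauto
  have hFW : ∀ i < 2 * σ, F i ∩ W = (J i).image w := by
    intro i hi
    ext z
    have h1 := mem_of_subset (hIR i hi) (a := z)
    have h2 := mem_of_subset (hJW i hi) (a := z)
    have h3 : z ∈ R → z ∉ W := fun h => disjoint_left.1 hRW h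
    have h4 : z ∈ X i → z ∉ R ∪ W := fun h => disjoint_left.1 (hXR i) h
    rw [mem_union] at h4
    rw [mem_inter, hF, mem_union, mem_union]
    tauto
  have hFX : ∀ i < 2 * σ, F i \ (R ∪ W) = X i := by
    intro i hi
    ext z
    have h1 := mem_of_subset (hIR i hi) (a := z)
    have h2 := mem_of_subset (hJW i hi) (a := z)
    have h4 : z ∈ X i → z ∉ R ∪ W := fun h => disjoint_left.1 (hXR i) h
    rw [mem_union] at h4
    rw [mem_sdiff, hF, mem_union, mem_union, mem_union]
    tauto
  have hFd : ∀ i < 2 * σ, ∀ j < 2 * σ, i ≠ j → Disjoint (F i) (F j) := by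
    intro i hi j hj hij
    have d1 := image_enum_disj iρ (hIr i hi) (hIr j hj) (hId i j hij)
    have d2 := image_enum_disj iw (hJr i hi) (hJr j hj) (hJd i j hij)
    have d3 := hXd i j hij
    have d4 := (hXR i).mono_right (union_subset_union (hIR j hj) (hJW j hj))
    have d5 := (hXR j).mono_right (union_subset_union (hIR i hi) (hJW i hi))
    have d6 := hRW.mono (hIR i hi) (hJW j hj)
    have d7 := hRW.mono (hIR j hj) (hJW i hi)
    simp only [hF, disjoint_union_left, disjoint_union_right] at *
    exact ⟨⟨d3, d5.1.symm, d5.2.symm⟩, ⟨d4.1, d1, d7.symm⟩, ⟨d4.2, d6, d2⟩⟩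
  have hcI : ∀ i < 2 * σ, #(F i ∩ R) = #(I i) := fun i hi => by
    rw [hFR i hi]; exact card_image_of_injOn (iρ.mono (by exact_mod_cast hIr i hi))
  have hcJ : ∀ i < 2 * σ, #(F i ∩ W) = #(J i) := fun i hi => by
    rw [hFW i hi]; exact card_image_of_injOn (iw.mono (by exact_mod_cast hJr i hi))
  have hav := averaging hRW hno (range (2 * σ)) F (by
      intro i hi
      rw [mem_range] at hi
      refine card_pos.1 (lt_of_lt_of_le ?_ (card_le_card (inter_subset_left (s₂ := W))))
      rw [hcJ i hi]
      by_cases h : i < σ <;> simp [hJ, h]) σ (by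
      intro A hA hAc
      obtain ⟨S, hSA, hSc⟩ := exists_subset_card_eq (Nat.succ_le_of_lt hAc)
      exact ⟨S, hSA, hSc, fun i hi j hj hij =>
        hFd i (mem_range.1 (hA (hSA hi))) j (mem_range.1 (hA (hSA hj))) hij⟩)
  rw [two_mul σ, sum_range_add] at hav
  have hA1 : ∀ i < σ, (#(link H W 2 (x (m i))) : ℚ) / ((#W).choose 2 : ℕ) ≤
      (#(H ∩ Fam R W (F i)) : ℚ) / ((#R).choose #(F i ∩ R) * (#W).choose #(F i ∩ W) : ℕ) := by
    intro i hi
    have hi2 : i < 2 * σ := by omega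
    have cI : #(I i) = 0 := by simp [hI, hi]
    have cJ : #(J i) = 2 := by simp [hJ, hi]
    rw [hcI i hi2, hcJ i hi2, cI, cJ, Nat.choose_zero_right, one_mul]
    refine div_le_div_of_nonneg_right (Nat.cast_le.2 ?_) (Nat.cast_nonneg _)
    obtain ⟨x1, x2⟩ := hx _ (mM i hi)
    apply card_le_card_of_injOn (insert (x (m i)))
    · intro Z hZ
      rw [mem_coe, link, mem_filter, mem_powersetCard] at hZ
      have hxZ : x (m i) ∉ Z := fun h => x2 (hZ.1.1 h)
      have hZR : Disjoint Z R := hRW.symm.mono_left hZ.1.1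
      rw [mem_coe, mem_inter, Fam, mem_filter, hcI i hi2, hcJ i hi2, cI, cJ, hFX i hi2]
      refine ⟨hZ.2, mem_univ _, ?_, ?_, ?_⟩
      · rw [insert_inter_of_notMem x1, disjoint_iff_inter_eq_empty.1 hZR, card_empty]
      · rw [insert_inter_of_notMem x2, inter_eq_left.2 hZ.1.1, hZ.1.2]
      · rw [insert_sdiff_of_notMem _ (by rw [mem_union]; tauto),
          sdiff_eq_empty_iff_subset.2 (hZ.1.1.trans subset_union_right)]
        simp [hX, hi]
    · intro Z hZ Z' hZ' h
      rw [mem_coe, link, mem_filter, mem_powersetCard] at hZ hZ'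
      have h1 : x (m i) ∉ Z := fun h => x2 (hZ.1.1 h)
      have h2 : x (m i) ∉ Z' := fun h => x2 (hZ'.1.1 h)
      rw [← erase_insert h1, ← erase_insert h2]
      exact congrArg (fun s => erase s (x (m i))) h
  have hB1 : ∀ i < σ, (#{f ∈ H | f ⊆ R ∪ W ∧ #(f ∩ R) = 2 ∧ #(f ∩ W) = 1} : ℚ) /
        ((2 * σ).choose 2 * #W : ℕ) ≤ (#(H ∩ Fam R W (F (σ + i))) : ℚ) /
        ((#R).choose #(F (σ + i) ∩ R) * (#W).choose #(F (σ + i) ∩ W) : ℕ) := by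
    intro i hi
    have hi2 : σ + i < 2 * σ := by omega
    have cI : #(I (σ + i)) = 2 := by simp [hI]
    have cJ : #(J (σ + i)) = 1 := by simp [hJ]
    rw [hcI _ hi2, hcJ _ hi2, cI, cJ, Nat.choose_one_right, hR]
    refine div_le_div_of_nonneg_right (Nat.cast_le.2 (card_le_card ?_)) (Nat.cast_nonneg _)
    intro f hf
    rw [mem_filter] at hf
    rw [mem_inter, Fam, mem_filter, hcI _ hi2, hcJ _ hi2, cI, cJ, hFX _ hi2]
    refine ⟨hf.1, mem_univ _, hf.2.2.1, hf.2.2.2, ?_⟩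
    rw [sdiff_eq_empty_iff_subset.2 hf.2.1]
    simp [hX]
  have hA2 := sum_le_sum fun i (hi : i ∈ range σ) => hA1 i (mem_range.1 hi)
  have hB2 := sum_le_sum fun i (hi : i ∈ range σ) => hB1 i (mem_range.1 hi)
  rw [sum_const, card_range, nsmul_eq_mul] at hB2
  have hsum : ∑ e ∈ M, (#(link H W 2 (x e)) : ℚ) / ((#W).choose 2 : ℕ) =
      ∑ i ∈ range σ, (#(link H W 2 (x (m i))) : ℚ) / ((#W).choose 2 : ℕ) := by
    conv_lhs => rw [← rm]
    exact sum_image fun a ha b hb h => im ha hb h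
  rw [hsum]
  exact (add_le_add hA2 hB2).trans hav

end Templates

section ThreeStep

variable {α : Type*} [DecidableEq α]

/-- The inductive step of `ore_matching` for triples. Here traces of size one and two are not
bounded separately but jointly, by `templates`: `xx e` is the vertex of the matching
edge `e` that carries the link if only one does, and `R` consists of the remaining vertices of the
matching. -/
lemma ore_step_three [Fintype α] {V : Finset α} {H : Finset (Finset α)} {τ : ℕ}
    (hV : 6 * (τ + 2) + 1 ≤ #V) (hH : ∀ f ∈ H, f ⊆ V ∧ #f = 3) (hO : Ore V H 3 (τ + 2))
    {M : Finset (Finset α)} (hMH : M ⊆ H) (hM : IsMat M) (hMc : #M = τ + 1) :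
    HasM H (τ + 2) := by
  by_contra hno
  set U := M.biUnion id with hU
  have hUc : #U = 3 * (τ + 1) := by
    rw [hU, card_biUnion (t := id) fun e he f hf hef => hM e he f hf hef,
      sum_congr rfl fun e he => (show #(id e) = 3 from (hH e (hMH he)).2), sum_const, hMc,
      smul_eq_mul, mul_comm]
  have hUV : U ⊆ V := biUnion_subset.2 fun f hf => (hH f (hMH hf)).1
  set W := V \ U with hW
  have hUW : Disjoint U W := disjoint_sdiff
  have hV' : U ∪ W = V := union_sdiff_of_subset hUV
  have hWc : #W + 3 * (τ + 1) = #V := by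
    have := card_le_card hUV
    rw [hW, card_sdiff_of_subset hUV, hUc]; omega
  have hMW : ∀ f ∈ M, Disjoint f W := fun f hf => hUW.mono_left (subset_biUnion_of_mem id hf)
  have hmeet : ∀ f ∈ H, ¬ f ⊆ W := fun f hf hfQ =>
    extend_disjoint hno hMH hM hMc hf (card_pos.1 (by rw [(hH f hf).2]; omega))
      fun e he => ((hMW e he).mono_right hfQ).symm
  have hch : ∀ e, ∃ x, e ∈ M → x ∈ e ∧ (∑ y ∈ e, #(link H W 2 y) ≤ 4 * (#W - 1) ∨
      ∑ y ∈ e, #(link H W 2 y) = #(link H W 2 x)) := by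
    intro e
    by_cases he : e ∈ M
    · have hec := (hH e (hMH he)).2
      rcases block_dichotomy (k := 2) hno hMH hM hMc hMW (by omega) (by omega) he hec with
        h | ⟨x, hx, h⟩
      · obtain ⟨x, hx⟩ := card_pos.1 (show 0 < #e by omega)
        refine ⟨x, fun _ => ⟨hx, Or.inl ?_⟩⟩
        simpa using h
      · refine ⟨x, fun _ => ⟨hx, Or.inr ?_⟩⟩
        exact sum_eq_single x (fun y hy hyx => by rw [h y hy hyx, card_empty]) fun h => absurd hx h
    · obtain ⟨x, -⟩ := card_pos.1 (show 0 < #V by omega)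
      exact ⟨x, fun h => absurd h he⟩
  choose xx hxx using hch
  have hinj : Set.InjOn xx M := by
    intro e he f hf hef
    by_contra hne
    have h1 := (hxx e he).1
    have h2 := (hxx f hf).1
    rw [hef] at h1
    exact disjoint_left.1 (hM e he f hf hne) h1 h2
  set X := M.image xx with hX
  have hXc : #X = τ + 1 := by rw [hX, card_image_of_injOn hinj, hMc]
  have hXU : X ⊆ U := image_subset_iff.2 fun e he => mem_biUnion.2 ⟨e, he, (hxx e he).1⟩
  set R := U \ X with hR
  have hRc : #R = 2 * (τ + 1) := by rw [hR, card_sdiff_of_subset hXU, hUc, hXc]; omega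
  have hRU : R ⊆ U := sdiff_subset
  have hRW : Disjoint R W := hUW.mono_left hRU
  have htem := templates hno hRW (by omega) hRc (by omega) xx hMc hinj fun e he =>
    ⟨fun h => (mem_sdiff.1 h).2 (mem_image_of_mem _ he),
      fun h => disjoint_left.1 (hMW e he) (hxx e he).1 h⟩
  set ET := #{f ∈ H | f ⊆ R ∪ W ∧ #(f ∩ R) = 2 ∧ #(f ∩ W) = 1} with hET
  have hE1 : #{f ∈ H | #(f ∩ U) = 1} ≤ ∑ e ∈ M, ∑ x ∈ e, #(link H W 2 x) := by
    refine (card_one_le (Q := W) (k := 2) fun f hf => ⟨hV' ▸ (hH f hf).1, (hH f hf).2⟩).trans ?_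
    rw [hU, sum_biUnion (t := id) fun e he f hf hef => hM e he f hf hef]; rfl
  have hsplit := sum_inter_split hUW (H := H) (r := 3)
    fun f hf => ⟨hV' ▸ (hH f hf).1, (hH f hf).2⟩
  have hE0 : #{f ∈ H | #(f ∩ U) = 0} = 0 := by
    rw [card_eq_zero, filter_eq_empty_iff]
    intro f hf h0
    rw [card_eq_zero, ← disjoint_iff_inter_eq_empty] at h0
    exact hmeet f hf fun x hx => (mem_union.1 (hV' ▸ (hH f hf).1 hx)).resolve_left
      fun h => disjoint_left.1 h0 hx h
  have hsplit' : ∑ f ∈ H, #(f ∩ W) = 2 * #{f ∈ H | #(f ∩ U) = 1} + #{f ∈ H | #(f ∩ U) = 2} := by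
    rw [hsplit, sum_range_succ, sum_range_succ, sum_range_succ, sum_range_one, hE0]
    omega
  have hav := ore_average (W := W) (by omega) hO sdiff_subset hmeet (by omega)
  have hcard : ∀ f ∈ H, #(f ∩ U) + #(f ∩ W) = 3 := fun f hf => by
    rw [← card_union_of_disjoint (hUW.mono inter_subset_right inter_subset_right),
      ← inter_union_distrib_left, inter_eq_left.2 (hV' ▸ (hH f hf).1), (hH f hf).2]
  have hE2 : #{f ∈ H | #(f ∩ U) = 2} ≤
      ET + ((3 * (τ + 1)).choose 2 - (2 * (τ + 1)).choose 2) * #W := by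
    have hsub : {f ∈ H | #(f ∩ U) = 2} ⊆ {f ∈ H | f ⊆ R ∪ W ∧ #(f ∩ R) = 2 ∧ #(f ∩ W) = 1} ∪
        ((powersetCard 2 U \ powersetCard 2 R) ×ˢ powersetCard 1 W).image
          (fun p => p.1 ∪ p.2) := by
      intro f hf
      rw [mem_filter] at hf
      have hc := hcard f hf.1
      have hfU : f ∩ U ∪ f ∩ W = f := by
        rw [← inter_union_distrib_left, inter_eq_left.2 (hV' ▸ (hH f hf.1).1)]
      rw [mem_union]
      by_cases h : f ∩ U ⊆ R
      · left
        have hfR : f ∩ R = f ∩ U :=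
          Subset.antisymm (inter_subset_inter_left hRU) (subset_inter inter_subset_left h)
        rw [mem_filter, hfR]
        refine ⟨hf.1, ?_, hf.2, by omega⟩
        rw [← hfU]
        exact union_subset_union h inter_subset_right
      · right
        refine mem_image.2 ⟨(f ∩ U, f ∩ W), ?_, hfU⟩
        simp only [mem_product, mem_sdiff, mem_powersetCard]
        exact ⟨⟨⟨inter_subset_right, hf.2⟩, fun h' => h h'.1⟩, inter_subset_right, by omega⟩
    refine (card_le_card hsub).trans ((card_union_le _ _).trans (Nat.add_le_add_left ?_ _))
    refine card_image_le.trans ?_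
    rw [card_product, card_sdiff_of_subset (powersetCard_mono hRU)]
    simp only [card_powersetCard, Nat.choose_one_right, hUc, hRc]
    exact le_rfl
  refine triple_arith M hMc (fun e => ∑ x ∈ e, #(link H W 2 x)) (fun e => #(link H W 2 (xx e)))
    hWc hV hE1 (fun e _ => ?_) (fun e he => (hxx e he).2) ?_ hE2 hsplit' hav
  · rw [← card_powersetCard]; exact card_le_card (filter_subset _ _)
  · obtain ⟨p, hp⟩ := Nat.exists_eq_add_of_le' (show 2 ≤ #W by omega)
    rw [← sum_div, hp] at htem
    rw [hp]
    have c1 := two_mul_choose_two (p + 1)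
    have c2 := two_mul_choose_two (2 * τ + 1)
    have c1q : 2 * ((p + 1 + 1).choose 2 : ℚ) = (p + 1 + 1) * (p + 1) := by exact_mod_cast c1
    have c2q : 2 * ((2 * τ + 1 + 1).choose 2 : ℚ) = (2 * τ + 1 + 1) * (2 * τ + 1) := by
      exact_mod_cast c2
    have q1 : ((p + 2).choose 2 : ℚ) = (p + 2) * (p + 1) / 2 := by
      rw [eq_div_iff two_ne_zero]; linarith
    have q2 : ((2 * (τ + 1)).choose 2 : ℚ) = (τ + 1) * (2 * τ + 1) := by
      rw [show 2 * (τ + 1) = 2 * τ + 1 + 1 by ring]; linarith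
    push_cast at htem
    rw [q1, q2] at htem
    set Lh : ℚ := ∑ e ∈ M, (#(link H W 2 (xx e)) : ℚ) with hL
    rw [show p + 2 - 1 = p + 1 by omega]
    have hfin : (ET : ℚ) * (p + 1) + 2 * (2 * τ + 1) * Lh ≤
        (τ + 1) * (2 * τ + 1) * ((p + 2) * (p + 1)) := by
      have hpos : (0 : ℚ) ≤ (2 * τ + 1) * (p + 2) * (p + 1) := by positivity
      have := mul_le_mul_of_nonneg_right htem hpos
      have e : (Lh / ((p + 2) * (p + 1) / 2) + (τ + 1) * (ET / ((τ + 1) * (2 * τ + 1) * (p + 2)))) *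
          ((2 * τ + 1) * (p + 2) * (p + 1)) = ET * (p + 1) + 2 * (2 * τ + 1) * Lh := by
        field_simp
        ring
      rw [e] at this
      linarith
    rw [hL] at hfin
    exact_mod_cast hfin

end ThreeStep

/-! ### The matching theorem and the degree bound -/

section OreTheorem
variable {α : Type*} [DecidableEq α]

/-- The Ore-degree matching theorem with at least `r (r - 1) s + 1` vertices. -/
theorem ore_matching [Fintype α] {r : ℕ} (hr : 2 ≤ r) (s : ℕ) : ∀ (V : Finset α)
    (H : Finset (Finset α)), (∀ f ∈ H, f ⊆ V ∧ #f = r) → r * (r - 1) * s + 1 ≤ #V →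
    Ore V H r s → HasM H s := by
  obtain ⟨k, rfl⟩ := Nat.exists_eq_add_of_le' (show 1 ≤ r by omega)
  rw [Nat.add_sub_cancel]
  induction s with
  | zero => exact fun V H _ _ _ => ⟨∅, empty_subset _, rfl, by simp⟩
  | succ σ ih =>
    intro V H hH hV hO
    rcases σ with _ | τ
    -- for `s = 1`, an empty `H` violates the Ore condition on any `r`-set
    · by_contra hno
      have hHe : H = ∅ := by
        rw [eq_empty_iff_forall_notMem]
        intro f hf
        exact hno ⟨{f}, singleton_subset_iff.2 hf, card_singleton f, by simp⟩
      obtain ⟨S, hS, hSc⟩ := exists_subset_card_eq (s := V) (n := k + 1) (by nlinarith)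
      have := hO S hS hSc (by simp [hHe])
      simp [hHe, vdeg] at this
    · have e : (k + 1) * k * (τ + 1 + 1) = (k + 1) * k * (τ + 1) + (k + 1) * k := by ring
      have hk2 : 2 ≤ (k + 1) * k := by nlinarith
      have hcrit : ∀ v ∈ V, ∃ M ⊆ H, IsMat M ∧ #M = τ + 1 ∧ ∀ f ∈ M, v ∉ f := by
        intro v hv
        obtain ⟨M, hMH, hMc, hM⟩ := ih (V.erase v) {f ∈ H | v ∉ f} (fun f hf => by
          rw [mem_filter] at hf
          exact ⟨subset_erase.2 ⟨(hH f hf.1).1, hf.2⟩, (hH f hf.1).2⟩)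
          (by rw [card_erase_of_mem hv]; omega)
          (ore_erase hr (by omega) (by omega) hH hO hv)
        exact ⟨M, hMH.trans (filter_subset _ _), hM, hMc, fun f hf => (mem_filter.1 (hMH hf)).2⟩
      by_cases hk : k = 2
      · subst hk
        obtain ⟨v, hv⟩ := card_pos.1 (show 0 < #V by omega)
        obtain ⟨M, hMH, hM, hMc, -⟩ := hcrit v hv
        exact ore_step_three (by omega) hH hO hMH hM hMc
      · exact ore_step_of_ne_three (by omega) hV hH hO hcrit
end OreTheorem

theorem stmt18 (n r s : ℕ) (hn : r*s < n)
    (H : Finset (Finset (Fin n))) (hunif : ∀ e ∈ H, e.card = r)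
    (hnomatch : ¬ ∃ M ⊆ H, M.card = s ∧ ∀ e ∈ M, ∀ f ∈ M, e ≠ f → Disjoint e f)
    (hore : ∀ S : Finset (Fin n), S.card = r → S ∉ H →
      r * ((n-1).choose (r-1) - (n-s).choose (r-1)) < ∑ v ∈ S, hdeg H v)
    (hIH : ∀ m : ℕ, m < n → 3*r^2*(s-2)+1 ≤ m →
      ∀ G : Finset (Finset (Fin m)), (∀ e ∈ G, e.card = r) →
      (∀ S : Finset (Fin m), S.card = r → S ∉ G →
        r * ((m-1).choose (r-1) - (m-(s-1)).choose (r-1)) < ∑ v ∈ S, hdeg G v) →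
      ∃ M ⊆ G, M.card = s-1 ∧ ∀ e ∈ M, ∀ f ∈ M, e ≠ f → Disjoint e f) :
    ∀ v : Fin n, hdeg H v ≤ r*(s-1) * (n-2).choose (r-2) := by
  intro v
  have hHV : ∀ f ∈ H, f ⊆ (univ : Finset (Fin n)) ∧ #f = r := fun f hf => ⟨subset_univ _, hunif f hf⟩
  have hcu : #(univ : Finset (Fin n)) = n := by rw [card_univ, Fintype.card_fin]
  -- for `s = 0` the empty matching contradicts `hnomatch`; for `s = 1` there are no edges
  rcases s with _ | _ | τ
  · exact absurd ⟨∅, empty_subset _, rfl, by simp⟩ hnomatch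
  · have hHe : H = ∅ := by
      rw [eq_empty_iff_forall_notMem]
      intro f hf
      exact hnomatch ⟨{f}, singleton_subset_iff.2 hf, card_singleton f, by simp⟩
    simp [hHe, hdeg]
  rw [show τ + 1 + 1 - 1 = τ + 1 by omega] at *
  -- for `r ≤ 1` the truncated `n - 2` and `r - 2` matter: then every degree is `0`, resp. at most `1`
  rcases r with _ | _ | q
  · rw [hdeg, card_eq_zero.2]
    · exact Nat.zero_le _
    rw [filter_eq_empty_iff]
    intro f hf
    rw [card_eq_zero.1 (hunif f hf)]; simp
  · have : hdeg H v ≤ 1 := by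
      rw [hdeg, card_le_one]
      intro e he f hf
      rw [mem_filter] at he hf
      obtain ⟨a, rfl⟩ := card_eq_one.1 (hunif e he.1)
      obtain ⟨b, rfl⟩ := card_eq_one.1 (hunif f hf.1)
      rw [← mem_singleton.1 he.2, ← mem_singleton.1 hf.2]
    simp; omega
  have hn2 : 2 ≤ n := by nlinarith
  obtain ⟨p, rfl⟩ := Nat.exists_eq_add_of_le' hn2
  by_contra hlt
  push Not at hlt
  by_cases hbig : (q + 2) * (q + 1) * (τ + 1) + 1 ≤ p + 1
  · have hO : Ore univ H (q + 2) (τ + 1 + 1) := by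
      intro S _ hSc hSH
      rw [hcu]
      exact hore S hSc hSH
    obtain ⟨M, hMH, hMc, hM⟩ := ore_matching (show 2 ≤ q + 2 by omega) (τ + 1) (univ.erase v)
      {f ∈ H | v ∉ f} (fun f hf => by
          rw [mem_filter] at hf
          exact ⟨subset_erase.2 ⟨subset_univ _, hf.2⟩, hunif f hf.1⟩)
      (by rw [card_erase_of_mem (mem_univ v), hcu]; exact hbig)
      (ore_erase (by omega) (by omega) (by omega) hHV hO (mem_univ v))
    refine hnomatch (extend_matching hHV (hMH.trans (filter_subset _ _)) hM hMc (mem_univ v)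
      (fun f hf => (mem_filter.1 (hMH hf)).2) ?_)
    rw [hcu]
    exact hlt
  -- too few vertices for `ore_matching` in `H - v`; then `n - 1 ≤ r (r - 1)(s - 1)`, and already the
  -- trivial bound `C(n - 1, r - 1) = (n - 1) / (r - 1) * C(n - 2, r - 2)` is small enough
  · have hd : hdeg H v ≤ (p + 1).choose (q + 1) := by
      have := card_powersetCard_mem (k := q + 2) (W := (univ : Finset (Fin (p + 2)))) (by omega)
        (mem_univ v)
      rw [hcu] at this
      refine (card_le_card ?_).trans this.le
      intro f hf
      rw [mem_filter] at hf
      exact mem_filter.2 ⟨mem_powersetCard.2 (hHV f hf.1), hf.2⟩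
    have e1 := Nat.add_one_mul_choose_eq p q
    have h2 : p + 1 ≤ (q + 2) * (q + 1) * (τ + 1) := by omega
    have h3 := Nat.mul_le_mul_right (p.choose q) h2
    rw [e1] at h3
    have h4 : (p + 1).choose (q + 1) ≤ (q + 2) * (τ + 1) * p.choose q := by
      refine le_of_mul_le_mul_right ?_ (Nat.succ_pos q)
      calc _ ≤ _ := h3
        _ = _ := by rw [Nat.succ_eq_add_one]; ring
    exact absurd (hlt.trans_le (hd.trans h4)) (lt_irrefl _)
end
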